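/- arXiv:1704.03968 — 7 statements merged into one kernel-verified Lean document; each statement's English description precedes it below -/
import Mathlib

section
/- Let M be an integral model of a K-vector space V equipped with a single filtration F^• (the case s = 1). Then for any short exact sequence of k-vector spaces 0 → B̄ → M̄ → Ḡ → 0 there exists a short exact sequence of O-modules 0 → B → M → G → 0 such that: (1) G is flat over O; (2) the sequence reduces modulo 𝔪 to the given sequence of k-vector spaces; and (3) for every j, the image of F^j ∩ B in B̄ is all of F̄^j ∩ B̄. -/
/-!
The filtrations `F̄^j ∩ B̄` form a decreasing chain of subspaces of `B̄`, from `B̄` down to `0`, so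
`B̄` has a basis `S` adapted to this chain: for each `j` the elements of `S` lying in
`F̄^j ∩ B̄` span it (`exists_adapted_linearIndepOn`). Since there is only one filtration, each
vector `v` of `M̄` lifts to an element of `M` lying in `F^j` for the largest `j` with `v ∈ F̄^j`,
hence in every `F^j` for which the inclusion is possible (`exists_adapted_lift`). Let `B` be the
span of the lifts of `S`. Its intersection with `F^j` contains the lifts of a spanning set of
`F̄^j ∩ B̄`, which gives surjectivity, and the other inclusion is formal. Extending `S` to a basis
of `M̄` and lifting it gives a basis of `M` by Nakayama's lemma, so `M/B` is free, hence flat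
(`flat_quotient_span_of_lift`).
-/

open Module Submodule

section FilteredDefs

variable (F : Type*) [CommRing F] {V : Type*} [AddCommGroup V] [Module F V] {s : ℕ}

/-- The weight of a multi-filtered space: `w = Σ_i Σ_j j · dim (Fil_i^j / Fil_i^{j+1})`
(the filtrations are assumed to vanish at step `l`). -/
noncomputable def filWeight (Fil : Fin s → ℕ → Submodule F V) (l : ℕ) : ℕ :=
  ∑ i : Fin s, ∑ j ∈ Finset.range (l + 1),
    j * Module.finrank F ((Fil i j) ⧸ (Submodule.comap (Fil i j).subtype (Fil i (j + 1))))

/-- The slope `μ = w / dim`. -/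
noncomputable def filSlope (Fil : Fin s → ℕ → Submodule F V) (l : ℕ) : ℚ :=
  (filWeight F Fil l : ℚ) / (Module.finrank F V : ℚ)

/-- The filtrations induced on a subspace `W ⊆ V`. -/
def inducedFil (Fil : Fin s → ℕ → Submodule F V) (W : Submodule F V) :
    Fin s → ℕ → Submodule F W := fun i j => (Fil i j).comap W.subtype

/-- Semistability: every nonzero subspace, with the induced filtrations, has slope at most
that of the whole space. -/
def Semistable (Fil : Fin s → ℕ → Submodule F V) (l : ℕ) : Prop :=
  ∀ W : Submodule F V, W ≠ ⊥ →
    filSlope F (inducedFil F Fil W) l ≤ filSlope F Fil l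

end FilteredDefs

section Models

variable (O : Type*) [CommRing O] [IsDomain O] [ValuationRing O]
variable (K : Type*) [Field K] [Algebra O K] [IsFractionRing O K]
variable {V : Type*} [AddCommGroup V] [Module K V] [Module O V] [IsScalarTower O K V]
variable {s : ℕ}

/-- An integral model: a finite free `O`-submodule of `V` spanning `V` over `K`. -/
def IsIntegralModel (M : Submodule O V) : Prop :=
  Module.Finite O M ∧ Module.Free O M ∧ Submodule.span K (M : Set V) = ⊤

/-- The filtration induced on an integral model `M`: `Fil_i^j ∩ M`. -/
def filM (Fil : Fin s → ℕ → Submodule K V) (M : Submodule O V) :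
    Fin s → ℕ → Submodule O M :=
  fun i j => ((Fil i j).restrictScalars O).comap M.subtype

/-- The reduction `M̄ = M ⊗_O k = M / 𝔪M`. -/
abbrev Mbar (M : Submodule O V) : Type _ :=
  M ⧸ ((IsLocalRing.maximalIdeal O) • ⊤ : Submodule O M)

noncomputable instance (M : Submodule O V) :
    Module (IsLocalRing.ResidueField O) (Mbar O M) :=
  inferInstanceAs (Module (O ⧸ IsLocalRing.maximalIdeal O)
    (M ⧸ ((IsLocalRing.maximalIdeal O) • ⊤ : Submodule O M)))

instance (M : Submodule O V) :
    IsScalarTower O (IsLocalRing.ResidueField O) (Mbar O M) :=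
  inferInstanceAs (IsScalarTower O (O ⧸ IsLocalRing.maximalIdeal O)
    (M ⧸ ((IsLocalRing.maximalIdeal O) • ⊤ : Submodule O M)))

/-- The reduction map `M → M̄`. -/
noncomputable def redMap (M : Submodule O V) : M →ₗ[O] Mbar O M :=
  Submodule.mkQ _

/-- The induced filtration `Fil̄_i^j` on the reduction `M̄`: the image of `Fil_i^j ∩ M`. -/
noncomputable def filBar (Fil : Fin s → ℕ → Submodule K V) (M : Submodule O V) :
    Fin s → ℕ → Submodule (IsLocalRing.ResidueField O) (Mbar O M) :=
  fun i j => Submodule.span _ (redMap O M '' (filM O K Fil M i j : Set M))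

/-- The quotient ring `O/π`. -/
abbrev Oq (π : O) : Type _ := O ⧸ Ideal.span {π}

/-- The quotient `M̃ = M/πM`. -/
abbrev Mtil (M : Submodule O V) (π : O) : Type _ :=
  M ⧸ ((Ideal.span {π}) • ⊤ : Submodule O M)

/-- The reduction map `M → M̃`. -/
noncomputable def redMapTil (M : Submodule O V) (π : O) : M →ₗ[O] Mtil O M π :=
  Submodule.mkQ _

/-- The induced filtration `Fil̃_i^j` on `M̃`: the image of `Fil_i^j ∩ M`. -/
noncomputable def filTil (Fil : Fin s → ℕ → Submodule K V) (M : Submodule O V) (π : O) :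
    Fin s → ℕ → Submodule (Oq O π) (Mtil O M π) :=
  fun i j => Submodule.span _ (redMapTil O M π '' (filM O K Fil M i j : Set M))

/-- The natural map `M̃ = M/πM → M̄ = M/𝔪M` for `π ∈ 𝔪`. -/
noncomputable def thetaMap (M : Submodule O V) (π : O)
    (hπ : π ∈ IsLocalRing.maximalIdeal O) : Mtil O M π →ₗ[O] Mbar O M :=
  Submodule.mapQ _ _ LinearMap.id (by
    rw [Submodule.comap_id]
    exact Submodule.smul_mono (Ideal.span_le.mpr (by simpa using hπ)) le_rfl)

/-- The short exact sequence `0 → B̄ → M̄ → Ḡ → 0` of `k`-vector spaces determined by a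
subspace `B̄ ⊆ M̄` is liftable modulo `π ∈ 𝔪`: there is a short exact sequence
`0 → B̃ → M̃ → G̃ → 0` of `O/π`-modules with `G̃ = M̃/B̃` flat over `O/π`, reducing modulo `𝔪`
to the given sequence, and such that `Fil̃_i^j ∩ B̃` surjects onto `Fil̄_i^j ∩ B̄`. -/
def LiftableModulo (Fil : Fin s → ℕ → Submodule K V) (M : Submodule O V) (π : O)
    (hπ : π ∈ IsLocalRing.maximalIdeal O)
    (Bbar : Submodule (IsLocalRing.ResidueField O) (Mbar O M)) : Prop :=
  ∃ Btil : Submodule (Oq O π) (Mtil O M π),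
    Module.Flat (Oq O π) ((Mtil O M π) ⧸ Btil) ∧
    thetaMap O M π hπ '' (Btil : Set (Mtil O M π)) = (Bbar : Set (Mbar O M)) ∧
    ∀ i j, thetaMap O M π hπ ''
        ((filTil O K Fil M π i j ⊓ Btil : Submodule (Oq O π) (Mtil O M π)) : Set (Mtil O M π))
      = ((filBar O K Fil M i j ⊓ Bbar :
          Submodule (IsLocalRing.ResidueField O) (Mbar O M)) : Set (Mbar O M))

end Models

/-- A finite decreasing chain of subspaces ending in `0` has a basis adapted to it. -/
theorem exists_adapted_linearIndepOn {k W : Type*} [Field k] [AddCommGroup W] [Module k W]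
    (P : ℕ → Submodule k W) (hP : Antitone P) (l : ℕ) (hl : P l = ⊥) :
    ∃ S : Set W, S ⊆ P 0 ∧ LinearIndepOn k id S ∧ ∀ j, P j ≤ span k (S ∩ P j) := by
  -- Build the basis upwards along the chain, from `P l = 0` to `P 0`.
  suffices H : ∀ n ≤ l, ∃ S : Set W, S ⊆ P (l - n) ∧ LinearIndepOn k id S ∧
      ∀ j, l - n ≤ j → P j ≤ span k (S ∩ P j) by
    obtain ⟨S, h1, h2, h3⟩ := H l le_rfl
    rw [Nat.sub_self] at h1 h3
    exact ⟨S, h1, h2, fun j => h3 j (Nat.zero_le j)⟩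
  intro n
  induction n with
  | zero =>
    intro _
    refine ⟨∅, Set.empty_subset _, linearIndepOn_empty k id, fun j hj => ?_⟩
    exact (hP hj).trans (by simp [hl])
  | succ n ih =>
    intro hn
    obtain ⟨S, h1, h2, h3⟩ := ih (by omega)
    have hsub : S ⊆ P (l - (n + 1)) := fun x hx => hP (by omega) (h1 hx)
    obtain ⟨T, hT, hST, hspan, hli⟩ := exists_linearIndepOn_extension h2 hsub
    simp only [Set.image_id] at hspan
    refine ⟨T, hT, hli, fun j hj => ?_⟩
    rcases Nat.eq_or_lt_of_le hj with rfl | hj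
    · rw [Set.inter_eq_left.mpr hT]
      exact hspan
    · exact (h3 j (by omega)).trans (span_mono (Set.inter_subset_inter_left _ hST))

section Lift

variable {O : Type*} [CommRing O] [IsDomain O] [ValuationRing O]
variable {K : Type*} [Field K] [Algebra O K]
variable {V : Type*} [AddCommGroup V] [Module K V] [Module O V] [IsScalarTower O K V]

theorem redMap_surjective (M : Submodule O V) : Function.Surjective (redMap O M) :=
  Submodule.mkQ_surjective _

/-- The `k`-span in the definition of `filBar` adds nothing, because `O → k` is surjective. -/
theorem span_redMap_image (M : Submodule O V) (N : Submodule O M) :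
    (span (IsLocalRing.ResidueField O) (redMap O M '' (N : Set M)) : Set (Mbar O M)) =
      redMap O M '' (N : Set M) := by
  have h := Submodule.restrictScalars_span O (IsLocalRing.ResidueField O)
    IsLocalRing.residue_surjective (redMap O M '' (N : Set M))
  rw [← Submodule.coe_restrictScalars O, h, Submodule.span_image, Submodule.span_eq]
  rfl

theorem span_lift_map (M : Submodule O V) (g : Mbar O M → M)
    (hg : ∀ v, redMap O M (g v) = v) (S : Set (Mbar O M)) :
    redMap O M '' (span O (g '' S) : Set M) =
      (span (IsLocalRing.ResidueField O) S : Set (Mbar O M)) := by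
  have h := Submodule.restrictScalars_span O (IsLocalRing.ResidueField O)
    IsLocalRing.residue_surjective S
  rw [← Submodule.coe_restrictScalars O (span _ S), h, ← Submodule.map_coe, Submodule.map_span,
    Set.image_image]
  simp only [hg, Set.image_id']

/-- With a single filtration, a vector of `M̄` has one lift lying in all possible steps `F^j`. -/
theorem exists_adapted_lift (F : ℕ → Submodule K V) (l : ℕ) (hdec : Antitone F)
    (htop : F 0 = ⊤) (hbot : F l = ⊥) (M : Submodule O V) (v : Mbar O M) :
    ∃ m : M, redMap O M m = v ∧
      ∀ j, v ∈ filBar O K (fun _ : Fin 1 => F) M 0 j → (m : V) ∈ F j := by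
  classical
  set P : ℕ → Prop := fun j => v ∈ filBar O K (fun _ : Fin 1 => F) M 0 j with hPdef
  have hlift : ∀ j, P j → ∃ m : M, redMap O M m = v ∧ (m : V) ∈ F j := by
    intro j hj
    have : v ∈ redMap O M '' (filM O K (fun _ : Fin 1 => F) M 0 j : Set M) := by
      rw [← span_redMap_image]
      exact hj
    obtain ⟨m, hm, hmv⟩ := this
    exact ⟨m, hmv, hm⟩
  have h0 : P 0 := by
    obtain ⟨m, hm⟩ := redMap_surjective M v
    refine subset_span ⟨m, ?_, hm⟩
    change (m : V) ∈ F 0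
    rw [htop]
    trivial
  obtain ⟨m, hm, hmF⟩ := hlift _ (Nat.findGreatest_spec (P := P) (Nat.zero_le l) h0)
  refine ⟨m, hm, fun j hj => ?_⟩
  rcases le_total j l with hjl | hlj
  · exact hdec (Nat.le_findGreatest hjl hj) hmF
  · -- Beyond step `l` the filtration is zero, so `v = 0`, and `v` already lies in step `l`.
    have hPl : P l := by
      obtain ⟨m', hm', hmF'⟩ := hlift j hj
      exact subset_span ⟨m', hdec hlj hmF', hm'⟩
    have hml : (m : V) ∈ F l := hdec (Nat.le_findGreatest le_rfl hPl) hmF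
    rw [hbot, Submodule.mem_bot] at hml
    rw [hml]
    exact zero_mem _

/-- Lifts of linearly independent vectors of `M̄` span a direct summand of `M` with free
complement, spanned by the lifts of the remaining vectors of a basis of `M̄`. -/
theorem flat_quotient_span_of_lift (M : Submodule O V) [Module.Finite O M] [Module.Free O M]
    (g : Mbar O M → M) (hg : ∀ v, redMap O M (g v) = v) (S : Set (Mbar O M))
    (hS : LinearIndepOn (IsLocalRing.ResidueField O) id S) :
    Module.Flat O (M ⧸ span O (g '' S)) := by
  obtain ⟨T, -, hST, hspan, hT⟩ := exists_linearIndepOn_extension hS (Set.subset_univ S)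
  have hgT : LinearIndepOn O g T := by
    refine IsLocalRing.linearIndependent_of_flat (fun t : T => g t) ?_
    refine LinearIndependent.of_comp
      ((redMap O M).liftBaseChange (IsLocalRing.ResidueField O)) ?_
    have h : (redMap O M).liftBaseChange (IsLocalRing.ResidueField O) ∘
        (TensorProduct.mk O (IsLocalRing.ResidueField O) M 1 ∘ fun t : T => g t) =
        fun t : T => (t : Mbar O M) := by
      ext t
      simp [hg]
    rw [h]
    exact hT.linearIndependent
  have htop : span O (g '' T) = ⊤ := by
    refine IsLocalRing.map_mkQ_eq_top.mp (SetLike.coe_injective ?_)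
    refine (span_lift_map M g hg T).trans ?_
    rw [Set.image_id, Set.image_id] at hspan
    exact Set.univ_subset_iff.mp hspan
  have hcompl : IsCompl (span O (g '' S)) (span O (g '' (T \ S))) := by
    constructor
    · have h := hgT.linearIndependent.disjoint_span_image
        (s := Subtype.val ⁻¹' S) (t := Subtype.val ⁻¹' (T \ S))
        (Disjoint.preimage _ Set.disjoint_sdiff_right)
      have key : ∀ U ⊆ T, (fun t : T => g t) '' (Subtype.val ⁻¹' U) = g '' U := by
        intro U hU
        rw [← Set.image_image g Subtype.val, Subtype.image_preimage_coe,
          Set.inter_eq_right.mpr hU]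
      rwa [key S hST, key _ Set.sdiff_subset] at h
    · rw [codisjoint_iff, ← span_union, ← Set.image_union, Set.union_sdiff_cancel hST, htop]
  have hfree : Module.Free O (span O (g '' (T \ S))) := by
    rw [Set.image_eq_range]
    exact Module.Free.of_basis (Basis.span (hgT.mono Set.sdiff_subset).linearIndependent)
  exact Module.Flat.of_linearEquiv (Submodule.quotientEquivOfIsCompl _ _ hcompl)

end Lift

/-- Any short exact sequence `0 → B̄ → M̄ → Ḡ → 0` (determined by a subspace `B̄ ⊆ M̄`)
is liftable to `O` in the case of a single filtration `F^•`: there is `B ⊆ M` with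
`G = M/B` flat over `O`, whose reduction is the given sequence, and such that `F^j ∩ B`
surjects onto `F̄^j ∩ B̄` for all `j`. -/
theorem lift_single_filtration
    (O : Type*) [CommRing O] [IsDomain O] [ValuationRing O]
    (K : Type*) [Field K] [Algebra O K] [IsFractionRing O K]
    (V : Type*) [AddCommGroup V] [Module K V] [Module O V] [IsScalarTower O K V]
    [FiniteDimensional K V]
    (F : ℕ → Submodule K V) (l : ℕ)
    (hdec : Antitone F) (htop : F 0 = ⊤) (hbot : F l = ⊥)
    (M : Submodule O V) (hM : IsIntegralModel O K M)
    (Bbar : Submodule (IsLocalRing.ResidueField O) (Mbar O M)) :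
    ∃ B : Submodule O M,
      Module.Flat O (M ⧸ B) ∧
      redMap O M '' (B : Set M) = (Bbar : Set (Mbar O M)) ∧
      ∀ j, redMap O M ''
          ((filM O K (fun _ : Fin 1 => F) M 0 j ⊓ B : Submodule O M) : Set M)
        = ((filBar O K (fun _ : Fin 1 => F) M 0 j ⊓ Bbar :
            Submodule (IsLocalRing.ResidueField O) (Mbar O M)) : Set (Mbar O M)) := by
  obtain ⟨hfin, hfree, -⟩ := hM
  have hFbar : Antitone (filBar O K (fun _ : Fin 1 => F) M 0) := fun i j hij =>
    span_mono (Set.image_mono fun m hm => hdec hij hm)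
  have hFbar_bot : filBar O K (fun _ : Fin 1 => F) M 0 l = ⊥ := by
    refine Submodule.span_eq_bot.mpr ?_
    rintro _ ⟨m, hm, rfl⟩
    have hm' : (m : V) ∈ F l := hm
    rw [hbot, Submodule.mem_bot, Submodule.coe_eq_zero] at hm'
    rw [hm', map_zero]
  have hFbar_top : filBar O K (fun _ : Fin 1 => F) M 0 0 = ⊤ := by
    refine eq_top_iff.mpr fun v _ => ?_
    obtain ⟨m, hm⟩ := redMap_surjective M v
    refine subset_span ⟨m, ?_, hm⟩
    change (m : V) ∈ F 0
    rw [htop]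
    trivial
  obtain ⟨S, hS0, hSli, hSspan⟩ := exists_adapted_linearIndepOn
    (fun j => filBar O K (fun _ : Fin 1 => F) M 0 j ⊓ Bbar)
    (fun i j hij => inf_le_inf_right _ (hFbar hij)) l (by simp [hFbar_bot])
  simp only [hFbar_top, top_inf_eq] at hS0
  choose g hg hgF using exists_adapted_lift F l hdec htop hbot M
  have hB : redMap O M '' (span O (g '' S) : Set M) = (Bbar : Set (Mbar O M)) := by
    rw [span_lift_map M g hg S]
    refine congrArg _ (le_antisymm (span_le.mpr hS0) ?_)
    have h := hSspan 0
    simp only [hFbar_top, top_inf_eq] at h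
    exact h.trans (span_mono Set.inter_subset_left)
  refine ⟨span O (g '' S), flat_quotient_span_of_lift M g hg S hSli, hB, fun j => ?_⟩
  apply Set.Subset.antisymm
  · rintro _ ⟨m, ⟨hmF, hmB⟩, rfl⟩
    exact ⟨subset_span ⟨m, hmF, rfl⟩, hB.subset ⟨m, hmB, rfl⟩⟩
  · refine Set.Subset.trans (hSspan j) ?_
    rw [← span_lift_map M g hg]
    refine Set.image_mono (SetLike.coe_subset_coe.mpr (span_le.mpr ?_))
    rintro _ ⟨v, ⟨hvS, hvF, -⟩, rfl⟩
    exact ⟨hgF v j hvF, subset_span ⟨v, hvS, rfl⟩⟩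
end

section
/- Let M be an integral model of a multi-filtered K-vector space (V, Fil_i^•), let π ∈ 𝔪 be nonzero, and suppose the short exact sequence of k-vector spaces 0 → B̄ → M̄ → Ḡ → 0 is liftable modulo π via a lifting 0 → B̃ → M̃ → G̃ → 0 with a chosen splitting M̃ = B̃ ⊕ G̃. Then Hom_{Fil^•}(B̃, G̃) — the O/π-module of O/π-linear maps g : B̃ → G̃ carrying, for all i and j, the filtration step of B̃ induced by Fil̃_i^j into the filtration step of G̃ induced by Fil̃_i^j — is a finitely generated O/π-module. -/
/-!
A valuation ring `O` is coherent in the following strong sense: a finitely generated torsion-free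
`O`-module is free, so every linear map from a finite module to a torsion-free one has finitely
generated kernel (`ker_fg_of_torsionFree`). Hence, among submodules of torsion-free modules,
finite generation is preserved by preimages and by intersections.

Everything about `O/π`-modules is transported to `O`-modules. Since `M ∩ Fil_i^j` is the kernel of
`M → V / Fil_i^j`, it is finitely generated, and so is
`(M ∩ Fil_i^j) + πM`, the preimage in `M` of the step `Fil̃_i^j`. The preimage of `B̃` in `M` is
finitely generated as well, hence so is `Fil̃_i^j ∩ B̃`. For a finite set of generators `b` of the
latter, a map `g : B̃ → G̃` is compatible with the step `(i, j)` iff `g b ∈ Fil̃_i^j` for each `b`.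
As `Hom(B̃, G̃)` is a finite module, it is a quotient of some `O^n`, and each of these conditions
cuts out in `O^n` the preimage of `(M ∩ Fil_i^j) + πM` under a linear map `O^n → M` lifting
`x ↦ g_x b`. So the maps in question form the image of an intersection of finitely many finitely
generated submodules of `O^n`; only finitely many `j` matter, because the filtrations vanish from
step `l` on.
-/

open Module Submodule

/-! ### Coherence of valuation rings -/

section Coherence

variable {O : Type*} [CommRing O] [IsDomain O] [ValuationRing O]
variable {P Q : Type*} [AddCommGroup P] [Module O P] [AddCommGroup Q] [Module O Q]

/-- The image of `f` is finitely generated and torsion-free, hence free, so `f` splits off its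
kernel. -/
theorem ker_fg_of_torsionFree [Module.Finite O P] [Module.IsTorsionFree O Q] (f : P →ₗ[O] Q) :
    (LinearMap.ker f).FG := by
  have hfl : Module.Flat O (LinearMap.range f) := by
    rw [Module.Flat.flat_iff_torsion_eq_bot_of_isBezout]
    exact Submodule.isTorsionFree_iff_torsion_eq_bot.mp inferInstance
  have hfr : Module.Free O (LinearMap.range f) := Module.free_of_flat_of_isLocalRing
  obtain ⟨g, hg⟩ := Module.projective_lifting_property f.rangeRestrict LinearMap.id
    f.surjective_rangeRestrict
  -- `x ↦ x - g (f x)` is a projection of `P` onto the kernel.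
  have h : LinearMap.ker f = LinearMap.range (LinearMap.id - g ∘ₗ f.rangeRestrict) := by
    apply le_antisymm
    · intro x hx
      refine ⟨x, ?_⟩
      have : f.rangeRestrict x = 0 := Subtype.ext hx
      simp [this]
    · rintro _ ⟨x, rfl⟩
      have h1 : f.rangeRestrict (g (f.rangeRestrict x)) = f.rangeRestrict x :=
        LinearMap.congr_fun hg _
      have h2 : f (g (f.rangeRestrict x)) = f x := congrArg Subtype.val h1
      simp [h2]
  rw [h, LinearMap.range_eq_map]
  exact Module.Finite.fg_top.map _

theorem comap_fg_of_torsionFree [Module.Finite O P] [Module.IsTorsionFree O Q] (f : P →ₗ[O] Q)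
    {N : Submodule O Q} (hN : N.FG) : (N.comap f).FG := by
  have : Module.Finite O N := Module.Finite.iff_fg.mpr hN
  have h : N.comap f = (LinearMap.ker (f.coprod (-N.subtype))).map (LinearMap.fst O P N) := by
    ext x
    constructor
    · intro hx
      exact ⟨(x, ⟨f x, hx⟩), by simp, rfl⟩
    · rintro ⟨⟨y, n⟩, hy, rfl⟩
      have : f y = n := by simpa [add_neg_eq_zero] using hy
      simp [this]
  rw [h]
  exact (ker_fg_of_torsionFree _).map _

theorem inf_fg_of_torsionFree [Module.IsTorsionFree O Q] {N N' : Submodule O Q} (hN : N.FG)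
    (hN' : N'.FG) : (N ⊓ N').FG := by
  have : Module.Finite O N := Module.Finite.iff_fg.mpr hN
  rw [← Submodule.map_comap_subtype]
  exact (comap_fg_of_torsionFree _ hN').map _

theorem finset_inf_fg_of_torsionFree [Module.Finite O Q] [Module.IsTorsionFree O Q] {ι : Type*}
    (t : Finset ι) (N : ι → Submodule O Q) (hN : ∀ i ∈ t, (N i).FG) : (t.inf N).FG := by
  classical
  induction t using Finset.induction_on with
  | empty => simpa using Module.Finite.fg_top
  | insert a t _ ih =>
    rw [Finset.inf_insert]
    exact inf_fg_of_torsionFree (hN a (by simp)) (ih fun i hi => hN i (by simp [hi]))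

/-- Preimages under a map `φ` into a quotient `q : Q → T` of a torsion-free module: lift `φ`
along `q`. -/
theorem comap_fg_of_comap_fg [Module.Finite O P] [Module.Projective O P]
    [Module.IsTorsionFree O Q] {T : Type*} [AddCommGroup T] [Module O T] (q : Q →ₗ[O] T)
    (hq : Function.Surjective q) (φ : P →ₗ[O] T) {N : Submodule O T} (hN : (N.comap q).FG) :
    (N.comap φ).FG := by
  obtain ⟨ψ, rfl⟩ := Module.projective_lifting_property q φ hq
  rw [Submodule.comap_comp]
  exact comap_fg_of_torsionFree ψ hN

/-- A submodule of a finite module cut out by finitely many conditions `φ c x ∈ N c` is finitely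
generated, if each `N c` has finitely generated preimage in a torsion-free module `Q`. -/
theorem fg_of_finite_conditions [Module.Finite O P] [Module.IsTorsionFree O Q] {T : Type*}
    [AddCommGroup T] [Module O T] (q : Q →ₗ[O] T) (hq : Function.Surjective q) {ι : Type*}
    (t : Finset ι) (φ : ι → P →ₗ[O] T) (N : ι → Submodule O T)
    (hN : ∀ c ∈ t, ((N c).comap q).FG) : (t.inf fun c => (N c).comap (φ c)).FG := by
  obtain ⟨n, p, hp⟩ := Module.Finite.exists_fin' O P
  have h : (t.inf fun c => (N c).comap (φ c))
      = (t.inf fun c => (N c).comap (φ c ∘ₗ p)).map p := by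
    rw [← Submodule.map_comap_eq_of_surjective hp (t.inf fun c => (N c).comap (φ c))]
    congr 1
    ext x
    simp [Submodule.mem_finsetInf]
  rw [h]
  exact (finset_inf_fg_of_torsionFree t _ fun c hc =>
    comap_fg_of_comap_fg q hq (φ c ∘ₗ p) (hN c hc)).map _

end Coherence

/-! ### Filtration steps of `M̃` -/

theorem fg_of_fg_restrictScalars {A B E : Type*} [CommRing A] [CommRing B] [Algebra A B]
    [AddCommGroup E] [Module A E] [Module B E] [IsScalarTower A B E] {N : Submodule B E}
    (h : (N.restrictScalars A).FG) : N.FG := by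
  obtain ⟨t, ht⟩ := h
  refine ⟨t, le_antisymm (Submodule.span_le.mpr fun x hx => ?_) fun x hx => ?_⟩
  · have : x ∈ N.restrictScalars A := ht ▸ Submodule.subset_span hx
    exact this
  · have : x ∈ Submodule.span A (t : Set E) := ht ▸ hx
    exact Submodule.span_le_restrictScalars A B _ this

section Steps

variable {O : Type*} [CommRing O] [IsDomain O] [ValuationRing O]
variable {K : Type*} [Field K] [Algebra O K] [IsFractionRing O K]
variable {V : Type*} [AddCommGroup V] [Module K V] [Module O V] [IsScalarTower O K V]
variable {s : ℕ}

theorem redMapTil_surjective (M : Submodule O V) (π : O) :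
    Function.Surjective (redMapTil O M π) := Submodule.mkQ_surjective _

/-- `M ∩ Fil_i^j` is the kernel of `M → V / Fil_i^j`, whose target is torsion-free. -/
theorem filM_fg (Fil : Fin s → ℕ → Submodule K V) (M : Submodule O V) [Module.Finite O M]
    (i : Fin s) (j : ℕ) : (filM O K Fil M i j).FG := by
  have : Module.IsTorsionFree O (V ⧸ Fil i j) :=
    Module.IsTorsionFree.trans_faithfulSMul O K _
  have h : filM O K Fil M i j
      = LinearMap.ker (((Fil i j).mkQ.restrictScalars O) ∘ₗ M.subtype) := by
    ext x
    simp [filM]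
  rw [h]
  exact ker_fg_of_torsionFree _

/-- The step `Fil̃_i^j` is already the image of `M ∩ Fil_i^j`, no span being needed, because
`O → O/π` is surjective. -/
theorem filTil_restrictScalars (Fil : Fin s → ℕ → Submodule K V) (M : Submodule O V) (π : O)
    (i : Fin s) (j : ℕ) : (filTil O K Fil M π i j).restrictScalars O
      = (filM O K Fil M i j).map (redMapTil O M π) := by
  rw [filTil, Submodule.restrictScalars_span _ _ Ideal.Quotient.mk_surjective,
    ← Submodule.map_coe, Submodule.span_eq]

/-- A finitely generated submodule of `M̃` has finitely generated preimage in `M`, since `πM` is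
finitely generated. -/
theorem comap_redMapTil_fg (M : Submodule O V) [Module.Finite O M] (π : O)
    {N : Submodule O (Mtil O M π)} (hN : N.FG) : (N.comap (redMapTil O M π)).FG := by
  refine Submodule.fg_of_fg_map_of_fg_inf_ker (redMapTil O M π) ?_ ?_
  · rwa [Submodule.map_comap_eq_of_surjective (redMapTil_surjective M π)]
  · have : LinearMap.ker (redMapTil O M π) ≤ N.comap (redMapTil O M π) := fun x hx => by
      simp [LinearMap.mem_ker.mp hx]
    rw [inf_eq_right.mpr this, redMapTil, Submodule.ker_mkQ]
    exact Submodule.FG.smul ⟨{π}, by simp⟩ Module.Finite.fg_top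

theorem filTil_restrictScalars_fg (Fil : Fin s → ℕ → Submodule K V) (M : Submodule O V)
    [Module.Finite O M] (π : O) (i : Fin s) (j : ℕ) :
    ((filTil O K Fil M π i j).restrictScalars O).FG := by
  rw [filTil_restrictScalars]
  exact (filM_fg Fil M i j).map _

theorem filTil_eq_bot (Fil : Fin s → ℕ → Submodule K V) (M : Submodule O V) (π : O)
    {i : Fin s} {j : ℕ} (h : Fil i j = ⊥) : filTil O K Fil M π i j = ⊥ := by
  rw [filTil, Submodule.span_eq_bot]
  rintro _ ⟨x, hx, rfl⟩
  have h0 : (x : V) = 0 := by simpa [filM, h] using hx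
  have h1 : x = 0 := Subtype.ext h0
  rw [h1, map_zero]

theorem free_Mtil (M : Submodule O V) [Module.Finite O M] [Module.Free O M] (π : O) :
    Module.Free (Oq O π) (Mtil O M π) :=
  Module.Free.of_equiv ((TensorProduct.quotTensorEquivQuotSMul M
    (Ideal.span {π})).extendScalarsOfSurjective Ideal.Quotient.mk_surjective)

end Steps

/-- `Hom_{Fil^•}(B̃, G̃)`, the `O/π`-module of `O/π`-linear maps carrying the filtration steps
of `B̃` induced by `Fil̃_i^j` into those of `G̃`, is a finitely generated `O/π`-module. -/
theorem filHom_finitely_generated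
    (O : Type*) [CommRing O] [IsDomain O] [ValuationRing O]
    (K : Type*) [Field K] [Algebra O K] [IsFractionRing O K]
    (V : Type*) [AddCommGroup V] [Module K V] [Module O V] [IsScalarTower O K V]
    [FiniteDimensional K V]
    {s : ℕ} (Fil : Fin s → ℕ → Submodule K V) (l : ℕ)
    (hdec : ∀ i, Antitone (Fil i)) (htop : ∀ i, Fil i 0 = ⊤) (hbot : ∀ i, Fil i l = ⊥)
    (M : Submodule O V) (hM : IsIntegralModel O K M)
    (π : O) (hπ : π ∈ IsLocalRing.maximalIdeal O) (hπ0 : π ≠ 0)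
    (Bbar : Submodule (IsLocalRing.ResidueField O) (Mbar O M))
    (Btil Gtil : Submodule (Oq O π) (Mtil O M π)) (hc : IsCompl Btil Gtil)
    (hflat : Module.Flat (Oq O π) ((Mtil O M π) ⧸ Btil))
    (hred : thetaMap O M π hπ '' (Btil : Set (Mtil O M π)) = (Bbar : Set (Mbar O M)))
    (hfil : ∀ i j, thetaMap O M π hπ ''
          ((filTil O K Fil M π i j ⊓ Btil : Submodule (Oq O π) (Mtil O M π)) : Set (Mtil O M π))
        = ((filBar O K Fil M i j ⊓ Bbar :
            Submodule (IsLocalRing.ResidueField O) (Mbar O M)) : Set (Mbar O M))) :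
    (⨅ i : Fin s, ⨅ j : ℕ, Submodule.compatibleMaps
        ((filTil O K Fil M π i j).comap Btil.subtype)
        ((filTil O K Fil M π i j).comap Gtil.subtype)).FG := by
  obtain ⟨hfin, hfree, -⟩ := hM
  have hMfree : Module.Free (Oq O π) (Mtil O M π) := free_Mtil M π
  have hMfin : Module.Finite (Oq O π) (Mtil O M π) := inferInstance
  have htf : Module.IsTorsionFree O M := inferInstance
  have hBfin : Module.Finite (Oq O π) Btil :=
    Module.Finite.of_surjective (Btil.projectionOnto Gtil hc)
      (Submodule.projectionOnto_surjective hc)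
  have hGfin : Module.Finite (Oq O π) Gtil :=
    Module.Finite.of_surjective (Gtil.projectionOnto Btil hc.symm)
      (Submodule.projectionOnto_surjective hc.symm)
  -- Restriction `Hom(M̃, G̃) → Hom(B̃, G̃)` is surjective because `B̃` is a direct summand.
  have hEfin : Module.Finite (Oq O π) (Btil →ₗ[Oq O π] Gtil) := by
    refine Module.Finite.of_surjective (LinearMap.lcomp (Oq O π) Gtil Btil.subtype) fun g =>
      ⟨g ∘ₗ Btil.projectionOnto Gtil hc, ?_⟩
    ext x
    simp
  have hEfinO : Module.Finite O (Btil →ₗ[Oq O π] Gtil) := Module.Finite.trans (Oq O π) _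
  have hBO : (Btil.restrictScalars O).FG := by
    have : Module.Finite O Btil := Module.Finite.trans (Oq O π) _
    exact Module.Finite.iff_fg.mp this
  have hstep : ∀ i j, (((filTil O K Fil M π i j).restrictScalars O).comap
      (redMapTil O M π)).FG := fun i j =>
    comap_redMapTil_fg M π (filTil_restrictScalars_fg Fil M π i j)
  -- `Fil̃_i^j ∩ B̃` is the image in `M̃` of an intersection of two finitely generated
  -- submodules of `M`.
  have hgen : ∀ i j, ∃ t : Finset Btil, Submodule.span (Oq O π) (t : Set Btil)
      = (filTil O K Fil M π i j).comap Btil.subtype := by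
    intro i j
    have h1 := (inf_fg_of_torsionFree (hstep i j) (comap_redMapTil_fg M π hBO)).map
      (redMapTil O M π)
    rw [← Submodule.comap_inf, Submodule.map_comap_eq_of_surjective
      (redMapTil_surjective M π)] at h1
    have h2 : (filTil O K Fil M π i j ⊓ Btil).FG := fg_of_fg_restrictScalars (A := O) h1
    refine Submodule.fg_of_fg_map_injective Btil.subtype Btil.subtype_injective ?_
    rwa [Submodule.map_comap_subtype, inf_comm]
  choose t ht using hgen
  classical
  -- Evaluation at `b`, as an `O`-linear map to `M̃`.
  let ev : Btil → (Btil →ₗ[Oq O π] Gtil) →ₗ[O] Mtil O M π := fun b =>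
    (Gtil.subtype ∘ₗ LinearMap.applyₗ b).restrictScalars O
  let I : Finset (Σ _ : Fin s × ℕ, Btil) :=
    (Finset.univ ×ˢ Finset.range l).sigma fun c => t c.1 c.2
  have key := fg_of_finite_conditions (redMapTil O M π) (redMapTil_surjective M π) I
    (fun c => ev c.2) (fun c => (filTil O K Fil M π c.1.1 c.1.2).restrictScalars O)
    fun c _ => hstep _ _
  refine fg_of_fg_restrictScalars (A := O) ?_
  convert key using 1
  ext g
  have hg : ∀ i j, g ∈ Submodule.compatibleMaps ((filTil O K Fil M π i j).comap Btil.subtype)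
      ((filTil O K Fil M π i j).comap Gtil.subtype) ↔
      ∀ b ∈ t i j, ((g b : Gtil) : Mtil O M π) ∈ filTil O K Fil M π i j := by
    intro i j
    rw [← ht i j]
    change Submodule.span _ _ ≤ _ ↔ _
    rw [Submodule.span_le]
    rfl
  have hlarge : ∀ i j, l ≤ j → g ∈ Submodule.compatibleMaps
      ((filTil O K Fil M π i j).comap Btil.subtype)
      ((filTil O K Fil M π i j).comap Gtil.subtype) := by
    intro i j hj x hx
    have hb : Fil i j = ⊥ := le_bot_iff.mp ((hdec i hj).trans (hbot i).le)
    have hx0 : x = 0 := by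
      simpa [filTil_eq_bot Fil M π hb] using hx
    simp [hx0]
  simp only [Submodule.restrictScalars_mem, Submodule.mem_iInf, Submodule.mem_finsetInf]
  constructor
  · rintro h ⟨⟨i, j⟩, b⟩ hc'
    exact (hg i j).mp (h i j) b (Finset.mem_sigma.mp hc').2
  · intro h i j
    by_cases hj : l ≤ j
    · exact hlarge i j hj
    · exact (hg i j).mpr fun b hb => h ⟨⟨i, j⟩, b⟩
        (Finset.mem_sigma.mpr ⟨by simpa using hj, hb⟩)
end

section
/- Let O be a valuation ring with maximal ideal 𝔪, let π ∈ 𝔪 be nonzero, and let H = (O/π)^n. If H₁ ⊆ H is a finitely generated O/π-submodule and H₂ ⊆ H is a saturated O/π-submodule, then the intersection H₁ ∩ H₂ is a finitely generated O/π-module. -/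
/-!
The intersection is computed upstairs, over the domain `O`. A finitely generated torsion-free
module over a valuation ring is flat, hence free because `O` is local; so the kernel of a map from
a finitely generated module to a torsion-free one is finitely generated
(`ValuationRing.fg_ker_of_isTorsionFree`), and the intersection of two finitely generated
submodules of `O^n` is finitely generated (`ValuationRing.fg_inf_of_isTorsionFree`).

The quotient `H / H₂` is finitely generated and flat over the local ring `O/π`, hence free, so `H₂`
is itself finitely generated. As `O^n → (O/π)^n` has finitely generated kernel, the preimages of
`H₁` and `H₂` in `O^n` are finitely generated; their intersection is too, and it maps
onto `H₁ ⊓ H₂`.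
-/

theorem ValuationRing.fg_ker_of_isTorsionFree {O M F : Type*} [CommRing O] [IsDomain O]
    [ValuationRing O] [AddCommGroup M] [Module O M] [Module.Finite O M] [AddCommGroup F]
    [Module O F] [Module.IsTorsionFree O F] (f : M →ₗ[O] F) : (LinearMap.ker f).FG := by
  have : Module.Flat O (LinearMap.range f) := by
    rw [Module.Flat.flat_iff_torsion_eq_bot_of_isBezout]
    exact Submodule.isTorsionFree_iff_torsion_eq_bot.mp inferInstance
  have : Module.Free O (LinearMap.range f) := Module.free_of_flat_of_isLocalRing
  have : Module.FinitePresentation O (LinearMap.range f) :=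
    Module.finitePresentation_of_projective _ _
  simpa using Module.FinitePresentation.fg_ker f.rangeRestrict f.surjective_rangeRestrict

theorem ValuationRing.fg_inf_of_isTorsionFree {O F : Type*} [CommRing O] [IsDomain O]
    [ValuationRing O] [AddCommGroup F] [Module O F] [Module.IsTorsionFree O F]
    {A B : Submodule O F} (hA : A.FG) (hB : B.FG) : (A ⊓ B).FG := by
  have : Module.Finite O A := Module.Finite.iff_fg.mpr hA
  have : Module.Finite O B := Module.Finite.iff_fg.mpr hB
  -- `A ⊓ B` is the first projection of the kernel of `(a, b) ↦ a - b`.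
  let g : (A × B) →ₗ[O] F := A.subtype.coprod (-B.subtype)
  have key := (ValuationRing.fg_ker_of_isTorsionFree g).map (A.subtype ∘ₗ LinearMap.fst O A B)
  convert key using 1
  ext x
  simp only [Submodule.mem_inf, Submodule.mem_map, LinearMap.mem_ker]
  constructor
  · rintro ⟨ha, hb⟩
    exact ⟨(⟨x, ha⟩, ⟨x, hb⟩), by simp [g], rfl⟩
  · rintro ⟨⟨a, b⟩, hab, rfl⟩
    have h : (a : F) = b := by simpa [g, add_neg_eq_zero] using hab
    exact ⟨a.2, by simp [h]⟩


/-- Let `O` be a valuation ring with maximal ideal `𝔪`, `π ∈ 𝔪` nonzero and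
`H = (O/π)^n`. If `H₁ ⊆ H` is a finitely generated `O/π`-submodule and `H₂ ⊆ H` is a
saturated `O/π`-submodule (i.e. `H/H₂` is flat over `O/π`), then `H₁ ∩ H₂` is a finitely
generated `O/π`-module. -/
theorem inf_fg_of_fg_of_saturated
    (O : Type*) [CommRing O] [IsDomain O] [ValuationRing O]
    (π : O) (hπ : π ∈ IsLocalRing.maximalIdeal O) (hπ0 : π ≠ 0) (n : ℕ)
    (H₁ H₂ : Submodule (O ⧸ Ideal.span {π}) (Fin n → O ⧸ Ideal.span {π}))
    (h1 : H₁.FG)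
    (h2 : Module.Flat (O ⧸ Ideal.span {π}) ((Fin n → O ⧸ Ideal.span {π}) ⧸ H₂)) :
    (H₁ ⊓ H₂).FG := by
  have hI : Ideal.span {π} ≠ ⊤ := by
    rw [Ne, Ideal.span_singleton_eq_top]
    exact (IsLocalRing.mem_maximalIdeal π).mp hπ
  have : Nontrivial (O ⧸ Ideal.span {π}) := Ideal.Quotient.nontrivial_iff.mpr hI
  have : IsLocalRing (O ⧸ Ideal.span {π}) :=
    IsLocalRing.of_surjective' (Ideal.Quotient.mk _) Ideal.Quotient.mk_surjective
  have : Module.Free (O ⧸ Ideal.span {π}) ((Fin n → O ⧸ Ideal.span {π}) ⧸ H₂) :=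
    Module.free_of_flat_of_isLocalRing
  have : Module.FinitePresentation (O ⧸ Ideal.span {π}) ((Fin n → O ⧸ Ideal.span {π}) ⧸ H₂) :=
    Module.finitePresentation_of_projective _ _
  have hfg2 : H₂.FG := by
    simpa using Module.FinitePresentation.fg_ker H₂.mkQ H₂.mkQ_surjective
  let p : (Fin n → O) →ₗ[O] (Fin n → O ⧸ Ideal.span {π}) :=
    (Submodule.mkQ (Ideal.span {π})).compLeft (Fin n)
  have hp : Function.Surjective p := fun y => by
    choose x hx using fun i => Submodule.mkQ_surjective (Ideal.span {π}) (y i)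
    exact ⟨x, funext hx⟩
  have : Module.FinitePresentation O (O ⧸ Ideal.span {π}) :=
    Module.finitePresentation_of_surjective (Submodule.mkQ (Ideal.span {π}))
      (Submodule.mkQ_surjective _) (by rw [Submodule.ker_mkQ]; exact ⟨{π}, by simp [Ideal.span]⟩)
  have hker : (LinearMap.ker p).FG := Module.FinitePresentation.fg_ker p hp
  have hcomap (N : Submodule (O ⧸ Ideal.span {π}) (Fin n → O ⧸ Ideal.span {π})) (hN : N.FG) :
      ((N.restrictScalars O).comap p).FG := by
    refine Submodule.fg_of_fg_map_of_fg_inf_ker p ?_ ?_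
    · rw [Submodule.map_comap_eq_of_surjective hp]
      exact hN.restrictScalars
    · rwa [inf_eq_right.mpr (LinearMap.ker_le_comap p)]
  apply Submodule.FG.of_restrictScalars O
  have h := (ValuationRing.fg_inf_of_isTorsionFree (hcomap H₁ h1) (hcomap H₂ hfg2)).map p
  rwa [← Submodule.comap_inf, Submodule.map_comap_eq_of_surjective hp] at h
end

section
/- Let O be a valuation ring with maximal ideal 𝔪, let π ∈ 𝔪 be nonzero, and let H = (O/π)^N. Let H₁ ⊆ H be a finitely generated submodule and H₂ ⊆ H a saturated finitely generated submodule. Then there is an isomorphism of O/π-modules H/(H₁ ∩ 𝔪H + 𝔪H₂) ≅ (⊕_j O/(π_j)) ⊕ (⊕_i O/(π_i'·𝔪)) ⊕ (O/𝔪)^{⊕ s}, where the direct sums are finite, the elements π_j and π_i' lie in 𝔪 \ {0}, and O/(π'·𝔪) denotes the quotient of O by the ideal π'·𝔪. -/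
/-! Write `𝔪` for the maximal ideal and `P = H₁ + H₂`. The submodule
`K = H₁ ∩ 𝔪H + 𝔪H₂` satisfies `𝔪P ⊆ K ⊆ P`, and so do the preimages of `K` and `P` in `O^N`, the
preimage of `P` being finitely generated. So it suffices to decompose `O^n / K` whenever
`𝔪P ⊆ K ⊆ P` with `P` finitely generated and `π O^n ⊆ K` (`isDecomposed_quotient`); this class of
submodules is stable under surjective linear maps `O^n → O^m`.

The proof is by induction on `n`. The image of `K` under a coordinate is an ideal squeezed between
`p𝔪` and `(p)`, hence is one of the two (`eq_span_or_eq_mul`). Choose a coordinate `k` for which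
this image `J` is largest. Maximality provides a vector `e` with `e_k = 1` and `J e ⊆ K`
(`exists_vector`). Then `O^n = O e ⊕ O^{n-1}`, `K = J e ⊕ K'` with `K'` the projection of `K` along
`e`, and `O^n / K ≅ O / J × O^{n-1} / K'`. -/

open IsLocalRing

/-- The `O`-module `M` is a finite direct sum of modules `O/(p)`, `O/(p𝔪)` with
`p ∈ 𝔪 \ {0}`, and of copies of the residue field. -/
def IsDecomposed (O : Type*) [CommRing O] [IsLocalRing O]
    (M : Type*) [AddCommGroup M] [Module O M] : Prop :=
  ∃ (a b t : ℕ) (pj : Fin a → O) (pi' : Fin b → O),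
      (∀ j, pj j ∈ maximalIdeal O ∧ pj j ≠ 0) ∧
      (∀ i, pi' i ∈ maximalIdeal O ∧ pi' i ≠ 0) ∧
      Nonempty (M ≃ₗ[O]
        ((Π j : Fin a, O ⧸ Ideal.span {pj j}) ×
          (Π i : Fin b, O ⧸ (Ideal.span {pi' i} * maximalIdeal O)) ×
          (Fin t → ResidueField O)))

namespace IsDecomposed

variable {O : Type*} [CommRing O] [IsLocalRing O]
  {M : Type*} [AddCommGroup M] [Module O M] {M' : Type*} [AddCommGroup M'] [Module O M']

theorem congr (h : IsDecomposed O M) (e : M' ≃ₗ[O] M) : IsDecomposed O M' := by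
  obtain ⟨a, b, t, pj, pi', h1, h2, ⟨f⟩⟩ := h
  exact ⟨a, b, t, pj, pi', h1, h2, ⟨e.trans f⟩⟩

theorem of_subsingleton [Subsingleton M] : IsDecomposed O M := by
  refine ⟨0, 0, 0, Fin.elim0, Fin.elim0, fun j => j.elim0, fun j => j.elim0, ⟨?_⟩⟩
  exact { toFun := fun _ => 0, invFun := fun _ => 0, map_add' := by simp, map_smul' := by simp,
          left_inv := fun _ => Subsingleton.elim _ _, right_inv := fun _ => Subsingleton.elim _ _ }

theorem prod_span (h : IsDecomposed O M) {p : O} (hp0 : p ≠ 0) :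
    IsDecomposed O ((O ⧸ Ideal.span {p}) × M) := by
  by_cases hp : p ∈ maximalIdeal O
  · obtain ⟨a, b, t, pj, pi', h1, h2, ⟨f⟩⟩ := h
    refine ⟨a + 1, b, t, Fin.cons p pj, pi', ?_, h2, ⟨?_⟩⟩
    · intro j
      refine Fin.cases ?_ ?_ j
      · exact ⟨hp, hp0⟩
      · exact h1
    · have E := LinearEquiv.prodCongr (LinearEquiv.refl O (O ⧸ Ideal.span {p})) f
      refine E ≪≫ₗ ?_
      refine (LinearEquiv.prodAssoc O _ _ _).symm ≪≫ₗ ?_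
      refine LinearEquiv.prodCongr ?_ (LinearEquiv.refl O _)
      exact Fin.consLinearEquiv O
        (fun j : Fin (a + 1) => O ⧸ Ideal.span {(Fin.cons p pj : Fin (a + 1) → O) j})
  · have hu : IsUnit p := by simpa using hp
    have : Subsingleton (O ⧸ Ideal.span {p}) :=
      Ideal.Quotient.subsingleton_iff.2 (Ideal.span_singleton_eq_top.2 hu)
    have : Unique (O ⧸ Ideal.span {p}) := uniqueOfSubsingleton 0
    exact h.congr LinearEquiv.uniqueProd

theorem prod_mul (h : IsDecomposed O M) {p : O} (hp0 : p ≠ 0) :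
    IsDecomposed O ((O ⧸ (Ideal.span {p} * maximalIdeal O)) × M) := by
  obtain ⟨a, b, t, pj, pi', h1, h2, ⟨f⟩⟩ := h
  by_cases hp : p ∈ maximalIdeal O
  · refine ⟨a, b + 1, t, pj, Fin.cons p pi', h1, ?_, ⟨?_⟩⟩
    · intro j
      refine Fin.cases ?_ ?_ j
      · exact ⟨hp, hp0⟩
      · exact h2
    · have E := LinearEquiv.prodCongr
        (LinearEquiv.refl O (O ⧸ (Ideal.span {p} * maximalIdeal O))) f
      refine E ≪≫ₗ ?_
      refine (LinearEquiv.prodAssoc O _ _ _).symm ≪≫ₗ ?_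
      refine (LinearEquiv.prodCongr (LinearEquiv.prodComm O _ _) (LinearEquiv.refl O _)) ≪≫ₗ ?_
      refine (LinearEquiv.prodAssoc O _ _ _) ≪≫ₗ ?_
      refine LinearEquiv.prodCongr (LinearEquiv.refl O _) ?_
      refine (LinearEquiv.prodAssoc O _ _ _).symm ≪≫ₗ ?_
      refine LinearEquiv.prodCongr ?_ (LinearEquiv.refl O _)
      exact Fin.consLinearEquiv O (fun j : Fin (b + 1) =>
        O ⧸ (Ideal.span {(Fin.cons p pi' : Fin (b + 1) → O) j} * maximalIdeal O))
  · have hu : IsUnit p := by simpa using hp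
    have hJ : Ideal.span {p} * maximalIdeal O = maximalIdeal O := by
      rw [Ideal.span_singleton_eq_top.2 hu, Ideal.top_mul]
    refine ⟨a, b, t + 1, pj, pi', h1, h2, ⟨?_⟩⟩
    refine (LinearEquiv.prodCongr (Submodule.quotEquivOfEq _ _ hJ) f) ≪≫ₗ ?_
    refine (LinearEquiv.prodComm O _ _) ≪≫ₗ ?_
    refine (LinearEquiv.prodAssoc O _ _ _) ≪≫ₗ ?_
    refine LinearEquiv.prodCongr (LinearEquiv.refl O _) ?_
    refine (LinearEquiv.prodAssoc O _ _ _) ≪≫ₗ ?_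
    refine LinearEquiv.prodCongr (LinearEquiv.refl O _) ?_
    refine (LinearEquiv.prodComm O _ _) ≪≫ₗ ?_
    exact Fin.consLinearEquiv O (fun _ : Fin (t + 1) => ResidueField O)

end IsDecomposed

section

variable {O : Type*} [CommRing O] [IsDomain O] [ValuationRing O]

theorem eq_span_or_eq_mul {J : Ideal O} {p : O}
    (h1 : Ideal.span {p} * maximalIdeal O ≤ J) (h2 : J ≤ Ideal.span {p}) :
    J = Ideal.span {p} ∨ J = Ideal.span {p} * maximalIdeal O := by
  by_cases hp : p ∈ J
  · exact .inl (le_antisymm h2 ((Ideal.span_singleton_le_iff_mem _).2 hp))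
  · refine .inr (le_antisymm (fun x hx => ?_) h1)
    obtain ⟨c, rfl⟩ := Ideal.mem_span_singleton'.1 (h2 hx)
    have hc : c ∈ maximalIdeal O := by
      rw [mem_maximalIdeal, mem_nonunits_iff]
      rintro ⟨u, rfl⟩
      apply hp
      simpa using J.mul_mem_left (↑u⁻¹ : O) hx
    exact Ideal.mem_span_singleton_mul.2 ⟨c, hc, mul_comm p c⟩

/-- The valuation of `p` is detected by the ideal `p𝔪` provided `p ≠ 0`, even when `𝔪 = 𝔪²`. -/
theorem dvd_of_forall_mul_mem {p x : O} (hp : p ≠ 0)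
    (h : ∀ c ∈ maximalIdeal O, c * x ∈ Ideal.span {p} * maximalIdeal O) : p ∣ x := by
  rcases ValuationRing.dvd_total p x with hd | ⟨m, rfl⟩
  · exact hd
  by_cases hm : IsUnit m
  · obtain ⟨u, rfl⟩ := hm
    exact ⟨↑u⁻¹, by simp [mul_assoc]⟩
  · exfalso
    obtain ⟨z, hz, hz'⟩ := Ideal.mem_span_singleton_mul.1 (h m hm)
    -- now `x m z = m x` with `x m ≠ 0`, so `z = 1` lies in `𝔪`
    have hz1 : z = 1 := mul_left_cancel₀ hp (by rw [hz']; ring)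
    rw [hz1] at hz
    exact hz isUnit_one

/-- The splitting step: a coordinate `k`, a vector `e` with `e_k = 1`, and the image
`J` of `K` under that coordinate, such that `J e ⊆ K`. -/
theorem exists_vector {n : ℕ} {π : O} (hπ0 : π ≠ 0)
    {K P : Submodule O (Fin (n + 1) → O)} (hP : P.FG)
    (h1 : maximalIdeal O • P ≤ K) (h2 : K ≤ P) (hK : ∀ v, π • v ∈ K) :
    ∃ (k : Fin (n + 1)) (e : Fin (n + 1) → O) (p : O) (J : Ideal O), p ≠ 0 ∧ e k = 1 ∧
      (J = Ideal.span {p} ∨ J = Ideal.span {p} * maximalIdeal O) ∧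
      (∀ v ∈ K, v k ∈ J) ∧ ∀ c ∈ J, c • e ∈ K := by
  let c : Fin (n + 1) → Ideal O := fun l => K.map (LinearMap.proj l)
  have hc : ∀ l, ∀ v ∈ K, v l ∈ c l := fun l v hv => ⟨v, hv, rfl⟩
  obtain ⟨k, hk⟩ : ∃ k, ∀ l, c l ≤ c k := by
    classical
    exact Finite.exists_max c
  obtain ⟨p, hp⟩ : ∃ p, P.map (LinearMap.proj k : (Fin (n + 1) → O) →ₗ[O] O) = Ideal.span {p} :=
    (IsBezout.isPrincipal_of_FG _ (hP.map _)).principal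
  have hpx : ∃ x ∈ P, x k = p := by
    have : p ∈ P.map (LinearMap.proj k : (Fin (n + 1) → O) →ₗ[O] O) := by
      rw [hp]; exact Ideal.mem_span_singleton_self p
    exact this
  obtain ⟨x, hxP, hxk⟩ := hpx
  have hJ2 : c k ≤ Ideal.span {p} := hp ▸ Submodule.map_mono h2
  have hmx : ∀ m ∈ maximalIdeal O, m • x ∈ K := fun m hm => h1 (Submodule.smul_mem_smul hm hxP)
  have hJ1 : Ideal.span {p} * maximalIdeal O ≤ c k := by
    intro y hy
    obtain ⟨m, hm, rfl⟩ := Ideal.mem_span_singleton_mul.1 hy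
    have := hc k _ (hmx m hm)
    rwa [Pi.smul_apply, hxk, smul_eq_mul, mul_comm] at this
  have hp0 : p ≠ 0 := by
    rintro rfl
    have := hJ2 (hc k _ (hK 1))
    simp at this
    exact hπ0 this
  rcases eq_span_or_eq_mul hJ1 hJ2 with hJ | hJ
  · obtain ⟨y, hy, hyk⟩ : p ∈ c k := by rw [hJ]; exact Ideal.mem_span_singleton_self p
    have hdiv : ∀ l, ∃ d, y l = p * d := fun l =>
      Ideal.mem_span_singleton.1 (hJ2 (hk l (hc l y hy)))
    choose e he using hdiv
    have hye : y = p • e := funext he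
    refine ⟨k, e, p, c k, hp0, ?_, .inl hJ, hc k, ?_⟩
    · have : y k = p := hyk
      exact mul_left_cancel₀ hp0 (by rw [← he, this, mul_one])
    · intro d hd
      rw [hJ] at hd
      obtain ⟨d, rfl⟩ := Ideal.mem_span_singleton'.1 hd
      rw [mul_smul, ← hye]
      exact K.smul_mem _ hy
  · have hdiv : ∀ l, p ∣ x l := fun l => dvd_of_forall_mul_mem hp0 fun m hm => by
      rw [← hJ]
      exact hk l (hc l _ (hmx m hm))
    choose e he using hdiv
    have hxe : x = p • e := funext he
    refine ⟨k, e, p, c k, hp0, ?_, .inr hJ, hc k, ?_⟩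
    · exact mul_left_cancel₀ hp0 (by rw [← he, hxk, mul_one])
    · intro d hd
      rw [hJ] at hd
      obtain ⟨m, hm, rfl⟩ := Ideal.mem_span_singleton_mul.1 hd
      rw [mul_comm, mul_smul, ← hxe]
      exact hmx m hm

theorem isDecomposed_quotient {π : O} (hπ0 : π ≠ 0) (n : ℕ) :
    ∀ {K P : Submodule O (Fin n → O)}, P.FG → maximalIdeal O • P ≤ K → K ≤ P →
      (∀ v, π • v ∈ K) → IsDecomposed O ((Fin n → O) ⧸ K) := by
  induction n with
  | zero =>
    intro K P _ _ _ _
    have : Subsingleton ((Fin 0 → O) ⧸ K) := K.mkQ_surjective.subsingleton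
    exact .of_subsingleton
  | succ n ih =>
    intro K P hP h1 h2 hK
    obtain ⟨k, e, p, J, hp0, hek, hJ, hKJ, hJK⟩ := exists_vector hπ0 hP h1 h2 hK
    -- the projection along `e` onto the coordinates other than `k`
    let φ : (Fin (n + 1) → O) →ₗ[O] (Fin n → O) :=
      LinearMap.pi fun l => LinearMap.proj (k.succAbove l) - e (k.succAbove l) • LinearMap.proj k
    have hφ : ∀ v l, φ v l = v (k.succAbove l) - e (k.succAbove l) * v k := fun v l => rfl
    have hφs : ∀ (c : O) (w : Fin n → O), ∃ v, v k = c ∧ φ v = w := by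
      intro c w
      refine ⟨k.insertNth c fun l => w l + e (k.succAbove l) * c, by simp, ?_⟩
      funext l
      simp [hφ]
    have hφk : ∀ v, φ v = 0 → v = v k • e := by
      intro v hv
      funext l
      rcases Fin.eq_self_or_eq_succAbove k l with rfl | ⟨l, rfl⟩
      · simp [hek]
      · have := congrFun hv l
        rw [hφ] at this
        simpa [mul_comm] using sub_eq_zero.1 this
    have hdec : IsDecomposed O ((Fin n → O) ⧸ K.map φ) := by
      refine ih (P := P.map φ) (hP.map φ) ?_ (Submodule.map_mono h2) ?_
      · rw [← Submodule.map_smul'']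
        exact Submodule.map_mono h1
      · intro w
        obtain ⟨v, -, rfl⟩ := hφs 0 w
        exact ⟨π • v, hK v, map_smul φ π v⟩
    let Φ : (Fin (n + 1) → O) →ₗ[O] (O ⧸ J) × ((Fin n → O) ⧸ K.map φ) :=
      (J.mkQ ∘ₗ LinearMap.proj k).prod ((K.map φ).mkQ ∘ₗ φ)
    have hΦ : Function.Surjective Φ := by
      rintro ⟨x, y⟩
      obtain ⟨c, rfl⟩ := J.mkQ_surjective x
      obtain ⟨w, rfl⟩ := (K.map φ).mkQ_surjective y
      obtain ⟨v, rfl, rfl⟩ := hφs c w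
      exact ⟨v, rfl⟩
    have hker : LinearMap.ker Φ = K := by
      ext v
      have hmem : v ∈ LinearMap.ker Φ ↔ v k ∈ J ∧ φ v ∈ K.map φ := by
        rw [LinearMap.mem_ker, ← Submodule.Quotient.mk_eq_zero J,
          ← Submodule.Quotient.mk_eq_zero (K.map φ)]
        exact Prod.ext_iff
      rw [hmem]
      constructor
      · rintro ⟨hv, y, hy, hyv⟩
        have h := hφk (v - y) (by rw [map_sub, hyv, sub_self])
        rw [← sub_add_cancel v y, h]
        exact K.add_mem (hJK _ (J.sub_mem hv (hKJ y hy))) hy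
      · exact fun hv => ⟨hKJ v hv, v, hv, rfl⟩
    have E := (Submodule.quotEquivOfEq _ _ hker.symm).trans (Φ.quotKerEquivOfSurjective hΦ)
    rcases hJ with rfl | rfl
    · exact (hdec.prod_span hp0).congr E
    · exact (hdec.prod_mul hp0).congr E

end

/-- Let `O` be a valuation ring with maximal ideal `𝔪`, `π ∈ 𝔪` nonzero, `H = (O/π)^N`,
`H₁ ⊆ H` a finitely generated submodule and `H₂ ⊆ H` a saturated finitely generated
submodule. Then `H/(H₁ ∩ 𝔪H + 𝔪H₂) ≅ (⊕_j O/(π_j)) ⊕ (⊕_i O/(π_i'·𝔪)) ⊕ (O/𝔪)^s`,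
where the direct sums are finite and `π_j, π_i' ∈ 𝔪 \ {0}`. -/
theorem quotient_structure
    (O : Type*) [CommRing O] [IsDomain O] [ValuationRing O]
    (π : O) (hπ : π ∈ IsLocalRing.maximalIdeal O) (hπ0 : π ≠ 0) (N : ℕ)
    (H₁ H₂ : Submodule (O ⧸ Ideal.span {π}) (Fin N → O ⧸ Ideal.span {π}))
    (h1 : H₁.FG) (h2fg : H₂.FG)
    (h2sat : Module.Flat (O ⧸ Ideal.span {π}) ((Fin N → O ⧸ Ideal.span {π}) ⧸ H₂)) :
    ∃ (a b t : ℕ) (pj : Fin a → O) (pi' : Fin b → O),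
      (∀ j, pj j ∈ IsLocalRing.maximalIdeal O ∧ pj j ≠ 0) ∧
      (∀ i, pi' i ∈ IsLocalRing.maximalIdeal O ∧ pi' i ≠ 0) ∧
      Nonempty (
        ((Fin N → O ⧸ Ideal.span {π}) ⧸
          ((H₁ ⊓ (Ideal.map (Ideal.Quotient.mk (Ideal.span {π})) (IsLocalRing.maximalIdeal O)) •
              (⊤ : Submodule (O ⧸ Ideal.span {π}) (Fin N → O ⧸ Ideal.span {π}))) ⊔
            (Ideal.map (Ideal.Quotient.mk (Ideal.span {π})) (IsLocalRing.maximalIdeal O)) • H₂))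
        ≃ₗ[O]
        ((Π j : Fin a, O ⧸ Ideal.span {pj j}) ×
          (Π i : Fin b, O ⧸ (Ideal.span {pi' i} * IsLocalRing.maximalIdeal O)) ×
          (Fin t → IsLocalRing.ResidueField O))) := by
  let R := O ⧸ Ideal.span {π}
  let I : Ideal R := Ideal.map (Ideal.Quotient.mk (Ideal.span {π})) (maximalIdeal O)
  let K : Submodule R (Fin N → R) := (H₁ ⊓ I • ⊤) ⊔ I • H₂
  change IsDecomposed O ((Fin N → R) ⧸ K)
  let q : (Fin N → O) →ₗ[O] (Fin N → R) := (Algebra.linearMap O R).compLeft (Fin N)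
  have hq : Function.Surjective q := by
    intro w
    choose v hv using fun i => Ideal.Quotient.mk_surjective (w i)
    exact ⟨v, funext hv⟩
  have hKP : K ≤ H₁ ⊔ H₂ := sup_le_sup inf_le_left Submodule.smul_le_right
  have hPK : I • (H₁ ⊔ H₂) ≤ K := by
    rw [Submodule.smul_sup]
    exact sup_le_sup_right (le_inf Submodule.smul_le_right (smul_mono_right _ le_top)) _
  let P' : Submodule O (Fin N → O) := ((H₁ ⊔ H₂).restrictScalars O).comap q
  let K' : Submodule O (Fin N → O) := (K.restrictScalars O).comap q
  have hqπ : ∀ v, q (π • v) = 0 := by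
    intro v
    funext i
    exact Ideal.Quotient.eq_zero_iff_mem.2
      (Ideal.mul_mem_right _ _ (Ideal.mem_span_singleton_self π))
  have hker : LinearMap.ker q = Submodule.map (LinearMap.lsmul O (Fin N → O) π) ⊤ := by
    apply le_antisymm
    · intro v hv
      have : ∀ i, ∃ d, v i = π * d := fun i =>
        Ideal.mem_span_singleton.1 (Ideal.Quotient.eq_zero_iff_mem.1 (congrFun hv i))
      choose d hd using this
      exact ⟨d, trivial, (funext hd).symm⟩
    · rintro _ ⟨v, -, rfl⟩
      exact hqπ v
  have hP' : P'.FG := by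
    refine Submodule.fg_of_fg_map_of_fg_inf_ker q ?_ ?_
    · rw [Submodule.map_comap_eq_of_surjective hq]
      exact (h1.sup h2fg).restrictScalars_of_surjective Ideal.Quotient.mk_surjective
    · rw [inf_eq_right.2 (LinearMap.ker_le_comap q), hker]
      exact Module.Finite.fg_top.map _
  have hPK' : maximalIdeal O • P' ≤ K' := by
    rw [Submodule.smul_le]
    intro m hm v hv
    have : q (m • v) = (Ideal.Quotient.mk (Ideal.span {π}) m : R) • q v := by
      rw [map_smul]; rfl
    change q (m • v) ∈ K
    rw [this]
    exact hPK (Submodule.smul_mem_smul (Ideal.mem_map_of_mem _ hm) hv)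
  have hdec : IsDecomposed O ((Fin N → O) ⧸ K') :=
    isDecomposed_quotient hπ0 N hP' hPK' (fun v hv => hKP hv) fun v => by
      change q (π • v) ∈ K
      rw [hqπ]
      exact K.zero_mem
  let Ψ : (Fin N → O) →ₗ[O] ((Fin N → R) ⧸ K) := K.mkQ.restrictScalars O ∘ₗ q
  have hΨ : Function.Surjective Ψ := K.mkQ_surjective.comp hq
  have hΨk : LinearMap.ker Ψ = K' := by
    ext v
    exact Submodule.Quotient.mk_eq_zero K
  exact hdec.congr
    ((Submodule.quotEquivOfEq _ _ hΨk.symm).trans (Ψ.quotKerEquivOfSurjective hΨ)).symm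
end

section
/- Let (V, Fil_i^•) be a semistable multi-filtered K-vector space with integral model M, let 0 → B̄ → M̄ → Ḡ → 0 be a short exact sequence of k-vector spaces, and let π ∈ 𝔪 be a nonzero element of biggest valuation modulo which this sequence is liftable (i.e., it is liftable modulo π and every π' ∈ 𝔪 modulo which it is liftable divides π). Fix a lifting 0 → B̃ → M̃ → G̃ → 0 and set M' = ker(M → M/πM → G̃), with its induced short exact sequence of k-vector spaces 0 → Ḡ → M̄' → B̄ → 0. Then this sequence admits no splitting as multi-filtered vector spaces: there is no k-linear section s : B̄ → M̄' of the projection M̄' → B̄ which carries, for all i and j, the filtration step Fil̄_i^j ∩ B̄ of B̄ into the corresponding induced filtration step of M̄'. -/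
/-!
A splitting of `0 → Ḡ → M̄' → B̄ → 0` makes the original sequence liftable modulo `πε` for some
`ε ∈ 𝔪`, which contradicts the maximality of `π`.

Lift the image under the section of a basis of `B̄` to elements of `M'`. Their reductions in `M̄` are
linearly independent, so they span a direct summand `B` of `M` (`exists_retraction`), and
`M' = B + πM` by Nakayama (`mem_sup_of_mem_lift`). For `x ∈ Fil̄_i^j ∩ B̄` there is
`z ∈ Fil_i^j ∩ M'` reducing to the section at `x`, and also an element of `B` with this reduction.
Their difference lies in `𝔪M'`, hence in `εM' = εB + επM` for a single `ε ∈ 𝔪`, because `O` is a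
valuation ring. So `z` lies in `B + επM`. Finitely many vectors `x` generate all the steps
`Fil̄_i^j ∩ B̄`, so one `ε` serves for all of them (`exists_le_of_fg`, `exists_dvd_of_finset`). The
image of `B` in `M/πεM` is then a lifting modulo `πε`, with flat quotient since `B` is a direct
summand (`flat_quotient_of_retraction`). The case `ε = 0` is not excluded and needs no separate
treatment: `πε ∣ π` still forces `ε` to be a unit.
-/


open Module Submodule

section Mprime

variable (O : Type*) [CommRing O] [IsDomain O] [ValuationRing O]
variable {V : Type*} [AddCommGroup V] [Module O V]

/-- `M' = ker(M → M/πM → G̃)`, i.e. the preimage in `M` of `B̃ ⊆ M̃ = M/πM`,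
regarded as a submodule of `V`. -/
noncomputable def Mprime (M : Submodule O V) (π : O)
    (Btil : Submodule (Oq O π) (Mtil O M π)) : Submodule O V :=
  Submodule.map M.subtype
    (Submodule.comap (redMapTil O M π) (Submodule.restrictScalars O Btil))

/-- The map `M̄' → M̄` on reductions induced by an inclusion `M' ≤ M`. -/
noncomputable def redIncl (M' M : Submodule O V) (h : M' ≤ M) :
    Mbar O M' →ₗ[O] Mbar O M :=
  Submodule.mapQ _ _ (Submodule.inclusion h) (by
    rw [← Submodule.map_le_iff_le_comap, Submodule.map_smul'']
    exact Submodule.smul_mono le_rfl le_top)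

end Mprime

section Helpers

/-! ### Linear algebra over a valuation ring -/

/-- For a surjection of rings `R → S`, the `S`-span of the image of an `R`-submodule under an
`R`-linear map is just that image. -/
theorem mem_span_image_iff {R S N P : Type*} [CommRing R] [CommRing S] [Algebra R S]
    [AddCommGroup N] [Module R N] [AddCommGroup P] [Module R P] [Module S P]
    [IsScalarTower R S P] (hs : Function.Surjective (algebraMap R S))
    (f : N →ₗ[R] P) (A : Submodule R N) (y : P) :
    y ∈ Submodule.span S (f '' (A : Set N)) ↔ ∃ z ∈ A, f z = y := by
  rw [← Submodule.restrictScalars_mem R, Submodule.restrictScalars_span R S hs,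
    ← Submodule.map_coe, Submodule.span_eq, Submodule.mem_map]

variable {O : Type*} [CommRing O] [IsDomain O] [ValuationRing O]

/-- Over a valuation ring every element of `𝔪N` is a single multiple `ε • y` with `ε ∈ 𝔪`. -/
theorem exists_smul_of_mem_maximalIdeal_smul_top {N : Type*} [AddCommGroup N] [Module O N] {x : N}
    (hx : x ∈ ((IsLocalRing.maximalIdeal O) • ⊤ : Submodule O N)) :
    ∃ ε ∈ IsLocalRing.maximalIdeal O, ∃ y : N, x = ε • y := by
  induction hx using Submodule.smul_induction_on' with
  | smul r hr n _ => exact ⟨r, hr, n, rfl⟩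
  | add x _ y _ hx hy =>
    obtain ⟨a, ha, u, rfl⟩ := hx
    obtain ⟨b, hb, v, rfl⟩ := hy
    rcases ValuationRing.dvd_total a b with ⟨c, rfl⟩ | ⟨c, rfl⟩
    · exact ⟨a, ha, u + c • v, by rw [smul_add, smul_smul]⟩
    · exact ⟨b, hb, c • u + v, by rw [smul_add, smul_smul]⟩

theorem exists_dvd_of_finset {α : Type*} (t : Finset α) (f : α → O)
    (hf : ∀ a ∈ t, f a ∈ IsLocalRing.maximalIdeal O) :
    ∃ ε ∈ IsLocalRing.maximalIdeal O, ∀ a ∈ t, ε ∣ f a := by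
  classical
  induction t using Finset.induction_on with
  | empty => exact ⟨0, zero_mem _, by simp⟩
  | insert a t _ ih =>
    obtain ⟨ε, hε, h⟩ := ih fun b hb => hf b (Finset.mem_insert_of_mem hb)
    rcases ValuationRing.dvd_total ε (f a) with hd | hd
    · exact ⟨ε, hε, by simpa [hd] using h⟩
    · exact ⟨f a, hf a (Finset.mem_insert_self _ _), by
        simpa using fun b hb => hd.trans (h b hb)⟩

/-- If a finitely generated submodule `T` is covered by submodules `Q ε`, `ε ∈ 𝔪`, which grow as
`ε` becomes smaller in the divisibility order, then a single `Q ε` contains `T`. -/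
theorem exists_le_of_fg {N : Type*} [AddCommGroup N] [Module O N] (Q : O → Submodule O N)
    (hQ : ∀ a b, a ∣ b → Q b ≤ Q a) (T : Submodule O N) (hT : T.FG)
    (h : ∀ x ∈ T, ∃ ε ∈ IsLocalRing.maximalIdeal O, x ∈ Q ε) :
    ∃ ε ∈ IsLocalRing.maximalIdeal O, T ≤ Q ε := by
  obtain ⟨t, rfl⟩ := hT
  choose! f hf hfQ using fun x (hx : x ∈ t) => h x (Submodule.subset_span hx)
  obtain ⟨ε, hε, hd⟩ := exists_dvd_of_finset t f hf
  exact ⟨ε, hε, Submodule.span_le.2 fun x hx => hQ _ _ (hd x hx) (hfQ x hx)⟩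

/-- Vectors of a finite free module whose reductions modulo `𝔪` are linearly independent span a
direct summand: the map they define has a retraction. -/
theorem exists_retraction {N : Type*} [AddCommGroup N] [Module O N] [Module.Finite O N]
    [Module.Free O N] {n : ℕ} (b : Fin n → N)
    (hb : ∀ c : Fin n → O, (Fintype.linearCombination O b c) ∈
      ((IsLocalRing.maximalIdeal O) • ⊤ : Submodule O N) →
      ∀ i, c i ∈ IsLocalRing.maximalIdeal O) :
    ∃ r : N →ₗ[O] (Fin n → O), r ∘ₗ Fintype.linearCombination O b = LinearMap.id := by
  rw [IsLocalRing.split_injective_iff_lTensor_residueField_injective, injective_iff_map_eq_zero]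
  intro x hx
  obtain ⟨c, rfl⟩ := TensorProduct.mk_surjective O (Fin n → O) (IsLocalRing.ResidueField O)
    IsLocalRing.residue_surjective x
  rw [TensorProduct.mk_apply, LinearMap.lTensor_tmul] at hx
  have h2 : (Submodule.Quotient.mk (Fintype.linearCombination O b c) :
      N ⧸ ((IsLocalRing.maximalIdeal O) • ⊤ : Submodule O N)) = 0 :=
    (TensorProduct.quotTensorEquivQuotSMul_mk_one_tmul _ _).symm.trans
      ((congrArg (TensorProduct.quotTensorEquivQuotSMul N (IsLocalRing.maximalIdeal O)) hx).trans
        (map_zero _))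
  have h3 := hb c ((Submodule.Quotient.mk_eq_zero _).1 h2)
  rw [TensorProduct.mk_apply, pi_eq_sum_univ' c, TensorProduct.tmul_sum]
  refine Finset.sum_eq_zero fun i _ => ?_
  rw [TensorProduct.tmul_smul, TensorProduct.smul_tmul', Algebra.smul_def, mul_one,
    IsLocalRing.ResidueField.algebraMap_eq, (IsLocalRing.residue_eq_zero_iff _).2 (h3 i),
    TensorProduct.zero_tmul]

/-! ### Reduction modulo `π` -/

variable {V : Type*} [AddCommGroup V] [Module O V]

/-- `M/πM` is the base change of the free module `M` to `O/π`. -/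
theorem flat_Mtil (M : Submodule O V) [Module.Free O M] (π : O) :
    Module.Flat (Oq O π) (Mtil O M π) :=
  Module.Flat.of_linearEquiv
    ((TensorProduct.quotTensorEquivQuotSMul M (Ideal.span {π})).extendScalarsOfSurjective
      (S := Oq O π) Ideal.Quotient.mk_surjective).symm

/-- The reduction modulo `π` of a direct summand `range f` of `M` has flat quotient: the quotient
is a retract of `M/πM`. -/
theorem flat_quotient_of_retraction (M : Submodule O V) [Module.Free O M] (π : O) {n : ℕ}
    (f : (Fin n → O) →ₗ[O] M) (r : M →ₗ[O] (Fin n → O)) (hr : r ∘ₗ f = LinearMap.id) :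
    Module.Flat (Oq O π) ((Mtil O M π) ⧸
      Submodule.span (Oq O π) (redMapTil O M π '' (LinearMap.range f : Set M))) := by
  have := flat_Mtil M π
  set B := Submodule.span (Oq O π) (redMapTil O M π '' (LinearMap.range f : Set M)) with hB
  have hmem := mem_span_image_iff (S := Oq O π) Ideal.Quotient.mk_surjective
    (redMapTil O M π) (LinearMap.range f)
  -- the projector of `M` with kernel `range f`, reduced modulo `π`
  let e0 : Mtil O M π →ₗ[O] Mtil O M π := Submodule.mapQ _ _ (LinearMap.id - f ∘ₗ r) (by
    rw [← Submodule.map_le_iff_le_comap, Submodule.map_smul'']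
    exact Submodule.smul_mono le_rfl le_top)
  have he0 : ∀ m, e0 (redMapTil O M π m) = redMapTil O M π (m - f (r m)) := fun m => rfl
  let e : Mtil O M π →ₗ[Oq O π] Mtil O M π :=
    e0.extendScalarsOfSurjective Ideal.Quotient.mk_surjective
  have hrf : ∀ c, r (f c) = c := fun c => LinearMap.congr_fun hr c
  refine Module.Flat.of_retract (B.liftQ e ?_) B.mkQ ?_
  · intro x hx
    obtain ⟨_, ⟨c, rfl⟩, rfl⟩ := (hmem x).1 hx
    change e0 (redMapTil O M π (f c)) = 0
    rw [he0, hrf, sub_self, map_zero]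
  · refine LinearMap.ext fun q => ?_
    obtain ⟨x, rfl⟩ := Submodule.mkQ_surjective _ q
    obtain ⟨m, rfl⟩ : ∃ m, redMapTil O M π m = x := Submodule.mkQ_surjective _ x
    change B.mkQ (e0 (redMapTil O M π m)) = B.mkQ (redMapTil O M π m)
    rw [he0, ← sub_eq_zero, ← map_sub, ← map_sub, Submodule.mkQ_apply,
      Submodule.Quotient.mk_eq_zero]
    exact (hmem _).2 ⟨_, ⟨-r m, rfl⟩, by congr 1; rw [map_neg]; abel⟩

/-- If `B ⊆ M` reduces into a lift `B̃` of `B̄` with flat quotient, and maps onto `B̄`, then the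
preimage of `B̃` in `M` is contained in `B + πM`. The point is that `B̃` is a direct summand of
`M/πM`, so that `B̃ ∩ 𝔪M̃ = 𝔪B̃` and `B̃` is finitely generated, and Nakayama's lemma applies. -/
theorem mem_sup_of_mem_lift (M : Submodule O V) [Module.Finite O M] (π : O)
    (hπ : π ∈ IsLocalRing.maximalIdeal O)
    (Bbar : Submodule (IsLocalRing.ResidueField O) (Mbar O M))
    (Btil : Submodule (Oq O π) (Mtil O M π))
    (hflat : Module.Flat (Oq O π) ((Mtil O M π) ⧸ Btil))
    (hred : thetaMap O M π hπ '' (Btil : Set (Mtil O M π)) = (Bbar : Set (Mbar O M)))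
    (B : Submodule O M) (hB : ∀ b ∈ B, redMapTil O M π b ∈ Btil)
    (hBs : ∀ x ∈ Bbar, ∃ b ∈ B, redMap O M b = x)
    (w : M) (hw : redMapTil O M π w ∈ Btil) : ∃ b ∈ B, ∃ m : M, w = b + π • m := by
  have hnt : Nontrivial (Oq O π) := Ideal.Quotient.nontrivial_iff.2 fun h => by
    rw [Ideal.span_singleton_eq_top] at h
    exact (IsLocalRing.mem_maximalIdeal _).1 hπ h
  have : IsLocalRing (Oq O π) :=
    IsLocalRing.of_surjective' (Ideal.Quotient.mk (Ideal.span {π})) Ideal.Quotient.mk_surjective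
  have : Module.Finite (Oq O π) (Mtil O M π) := Module.Finite.of_restrictScalars_finite O _ _
  have : Module.Free (Oq O π) ((Mtil O M π) ⧸ Btil) := Module.free_of_flat_of_isLocalRing
  -- a finite flat module over a local ring is free, so `M̃ → M̃ / B̃` splits
  obtain ⟨σ, hσ⟩ := Module.projective_lifting_property Btil.mkQ LinearMap.id
    Btil.mkQ_surjective
  let p : Mtil O M π →ₗ[O] Mtil O M π :=
    (LinearMap.id - σ ∘ₗ Btil.mkQ).restrictScalars O
  have hpm : ∀ x, p x ∈ Btil := fun x => by
    rw [← Submodule.Quotient.mk_eq_zero, ← Submodule.mkQ_apply]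
    change Btil.mkQ (x - σ (Btil.mkQ x)) = 0
    rw [map_sub, sub_eq_zero]
    exact (LinearMap.congr_fun hσ (Btil.mkQ x)).symm
  have hpi : ∀ x ∈ Btil, p x = x := fun x hx => by
    change x - σ (Btil.mkQ x) = x
    rw [Submodule.mkQ_apply, (Submodule.Quotient.mk_eq_zero _).2 hx, map_zero, sub_zero]
  have hr : LinearMap.range p = Btil.restrictScalars O := le_antisymm
    (by rintro _ ⟨x, rfl⟩; exact hpm x) (fun x hx => ⟨x, hpi x hx⟩)
  have hfg : (Btil.restrictScalars O).FG := by
    rw [← hr]; exact Module.Finite.fg_top.map p |> fun h => by rwa [Submodule.map_top] at h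
  have key : Btil.restrictScalars O ≤ B.map (redMapTil O M π) :=
    Submodule.le_of_le_smul_of_le_jacobson_bot hfg
      (IsLocalRing.maximalIdeal_le_jacobson (R := O) ⊥) (by
      intro x hx
      obtain ⟨m, rfl⟩ : ∃ m, redMapTil O M π m = x := Submodule.mkQ_surjective _ x
      have hx' : redMap O M m ∈ Bbar := by
        rw [← SetLike.mem_coe, ← hred]
        exact ⟨_, hx, rfl⟩
      obtain ⟨b, hb, hbx⟩ := hBs _ hx'
      have h1 : m - b ∈ ((IsLocalRing.maximalIdeal O) • ⊤ : Submodule O M) :=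
        (Submodule.Quotient.eq _).1 hbx.symm
      obtain ⟨ε, hε, y, hy⟩ := exists_smul_of_mem_maximalIdeal_smul_top h1
      have h2 : redMapTil O M π m = redMapTil O M π b + ε • p (redMapTil O M π y) := by
        rw [← map_smul, ← map_smul, ← hy, map_sub, hpi _ (Btil.sub_mem hx (hB b hb))]
        abel
      rw [h2]
      exact Submodule.add_mem_sup (Submodule.mem_map_of_mem hb)
        (Submodule.smul_mem_smul hε (hpm _)))
  obtain ⟨b, hb, hbw⟩ := key hw
  have h3 : w - b ∈ ((Ideal.span {π}) • ⊤ : Submodule O M) :=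
    (Submodule.Quotient.eq _).1 hbw.symm
  rw [Submodule.ideal_span_singleton_smul] at h3
  obtain ⟨m, -, hm⟩ := h3
  exact ⟨b, hb, m, by rw [show π • m = w - b from hm]; abel⟩

end Helpers

/-! ### Lifting modulo `πε` from a filtered splitting -/

/-- Suppose `(V, Fil_i^•)` is semistable, `π ∈ 𝔪` is a nonzero element of biggest valuation
modulo which `0 → B̄ → M̄ → Ḡ → 0` is liftable, with lifting `0 → B̃ → M̃ → G̃ → 0`, and
`M' = ker(M → M/πM → G̃)`. Then the induced sequence `0 → Ḡ → M̄' → B̄ → 0` admits no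
splitting as multi-filtered vector spaces: there is no `k`-linear section `s : B̄ → M̄'` of
the projection `M̄' → B̄` carrying each `Fil̄_i^j ∩ B̄` into the corresponding induced
filtration step of `M̄'`. -/
theorem no_filtered_splitting
    (O : Type*) [CommRing O] [IsDomain O] [ValuationRing O]
    (K : Type*) [Field K] [Algebra O K] [IsFractionRing O K]
    (V : Type*) [AddCommGroup V] [Module K V] [Module O V] [IsScalarTower O K V]
    [FiniteDimensional K V]
    {s : ℕ} (Fil : Fin s → ℕ → Submodule K V) (l : ℕ)
    (hdec : ∀ i, Antitone (Fil i)) (htop : ∀ i, Fil i 0 = ⊤) (hbot : ∀ i, Fil i l = ⊥)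
    (hss : Semistable K Fil l)
    (M : Submodule O V) (hM : IsIntegralModel O K M)
    (Bbar : Submodule (IsLocalRing.ResidueField O) (Mbar O M))
    (π : O) (hπ : π ∈ IsLocalRing.maximalIdeal O) (hπ0 : π ≠ 0)
    (hmax : ∀ (π' : O) (hπ' : π' ∈ IsLocalRing.maximalIdeal O),
      LiftableModulo O K Fil M π' hπ' Bbar → π' ∣ π)
    (Btil : Submodule (Oq O π) (Mtil O M π))
    (hflat : Module.Flat (Oq O π) ((Mtil O M π) ⧸ Btil))
    (hred : thetaMap O M π hπ '' (Btil : Set (Mtil O M π)) = (Bbar : Set (Mbar O M)))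
    (hfil : ∀ i j, thetaMap O M π hπ ''
          ((filTil O K Fil M π i j ⊓ Btil : Submodule (Oq O π) (Mtil O M π)) : Set (Mtil O M π))
        = ((filBar O K Fil M i j ⊓ Bbar :
            Submodule (IsLocalRing.ResidueField O) (Mbar O M)) : Set (Mbar O M))) :
    ¬ ∃ sec : Bbar →ₗ[IsLocalRing.ResidueField O] Mbar O (Mprime O M π Btil),
        (∀ x : Bbar,
          redIncl O (Mprime O M π Btil) M (Submodule.map_subtype_le M _) (sec x)
            = (x : Mbar O M)) ∧
        ∀ i j, ∀ x : Bbar, (x : Mbar O M) ∈ filBar O K Fil M i j →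
          sec x ∈ filBar O K Fil (Mprime O M π Btil) i j := by
  rintro ⟨sec, hsec, hsecF⟩
  obtain ⟨hfin, hfree, -⟩ := hM
  have hsurjk : Function.Surjective (algebraMap O (IsLocalRing.ResidueField O)) :=
    IsLocalRing.residue_surjective
  have : Module.Finite (IsLocalRing.ResidueField O) (Mbar O M) :=
    Module.Finite.of_restrictScalars_finite O _ _
  have hBar := fun (M : Submodule O V) i j => mem_span_image_iff hsurjk (redMap O M)
    (filM O K Fil M i j)
  let N := Mprime O M π Btil
  let incl : N →ₗ[O] M := Submodule.inclusion (Submodule.map_subtype_le M _)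
  have hincl : ∀ w : N, redMapTil O M π (incl w) ∈ Btil := by
    rintro ⟨_, w, hw, rfl⟩
    exact hw
  -- lift the image under `sec` of a basis of `B̄` to `M'`
  let e := Module.finBasis (IsLocalRing.ResidueField O) Bbar
  choose b' hb' using fun i => Submodule.mkQ_surjective _ (sec (e i))
  let f' : (Fin _ → O) →ₗ[O] N := Fintype.linearCombination O b'
  let f : (Fin _ → O) →ₗ[O] M := Fintype.linearCombination O fun i => incl (b' i)
  have hff' : ∀ c, f c = incl (f' c) := fun c => by
    simp only [f, f', Fintype.linearCombination_apply, map_sum, map_smul]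
  have hredf' : ∀ c, redMap O N (f' c) = sec (∑ i, algebraMap O (IsLocalRing.ResidueField O) (c i) • e i) := fun c => by
    simp only [f', Fintype.linearCombination_apply, map_sum, map_smul]
    refine Finset.sum_congr rfl fun i _ => ?_
    rw [algebraMap_smul (IsLocalRing.ResidueField O) (c i) (sec (e i))]
    exact congrArg (c i • ·) (hb' i)
  have hredincl : ∀ w : N, redMap O M (incl w) =
      redIncl O N M (Submodule.map_subtype_le M _) (redMap O N w) := fun w => rfl
  have hredf : ∀ c, redMap O M (f c) =
      ((∑ i, algebraMap O (IsLocalRing.ResidueField O) (c i) • e i : Bbar) : Mbar O M) := fun c => by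
    rw [hff', hredincl, hredf', hsec]
  have hlift : ∀ x : Bbar, ∃ c, redMap O N (f' c) = sec x := fun x => by
    choose c hc using fun i => hsurjk (e.repr x i)
    exact ⟨c, by rw [hredf']; simp only [hc, e.sum_repr]⟩
  have hliftM : ∀ x ∈ Bbar, ∃ b ∈ LinearMap.range f, redMap O M b = x := fun x hx => by
    obtain ⟨c, hc⟩ := hlift ⟨x, hx⟩
    exact ⟨f c, ⟨c, rfl⟩, by rw [hff', hredincl, hc, hsec]⟩
  obtain ⟨r, hr⟩ := exists_retraction (fun i => incl (b' i)) (fun c hc i => by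
    have h0 : redMap O M (f c) = 0 := (Submodule.Quotient.mk_eq_zero _).2 hc
    rw [hredf, ZeroMemClass.coe_eq_zero] at h0
    have := Fintype.linearIndependent_iff.1 e.linearIndependent _ h0 i
    exact (IsLocalRing.residue_eq_zero_iff _).1 this)
  have hN : ∀ w : N, ∃ c, ∃ m : M, incl w = f c + π • m := fun w => by
    obtain ⟨_, ⟨c, rfl⟩, m, h⟩ := mem_sup_of_mem_lift M π hπ Bbar Btil hflat hred
      (LinearMap.range f) (by rintro _ ⟨c, rfl⟩; rw [hff']; exact hincl _) hliftM _ (hincl w)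
    exact ⟨c, m, h⟩
  -- `Q i j ε`: reductions of elements of `Fil_i^j ∩ M` congruent to an element of `range f`
  -- modulo `επ`
  let Q : Fin s → ℕ → O → Submodule O (Mbar O M) := fun i j ε =>
    Submodule.map (redMap O M) (filM O K Fil M i j ⊓
      (LinearMap.range f ⊔ LinearMap.range ((π * ε) • (LinearMap.id : M →ₗ[O] M))))
  have hQmono : ∀ i j a b, a ∣ b → Q i j b ≤ Q i j a := by
    rintro i j a _ ⟨b, rfl⟩
    refine Submodule.map_mono (inf_le_inf le_rfl (sup_le_sup le_rfl ?_))
    rintro _ ⟨m, rfl⟩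
    exact ⟨b • m, by simp [smul_smul, mul_comm, mul_left_comm]⟩
  let T : Fin s → ℕ → Submodule O (Mbar O M) := fun i j =>
    (filBar O K Fil M i j ⊓ Bbar).restrictScalars O
  have hTfg : ∀ i j, (T i j).FG := fun i j =>
    Submodule.FG.restrictScalars_of_surjective (IsNoetherian.noetherian _) hsurjk
  have hTQ : ∀ i j, ∀ x ∈ T i j, ∃ ε ∈ IsLocalRing.maximalIdeal O, x ∈ Q i j ε := by
    rintro i j x ⟨hx1, hx2⟩
    obtain ⟨z, hz, hzx⟩ := (hBar N i j _).1 (hsecF i j ⟨x, hx2⟩ hx1)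
    obtain ⟨c, hc⟩ := hlift ⟨x, hx2⟩
    have h1 : z - f' c ∈ ((IsLocalRing.maximalIdeal O) • ⊤ : Submodule O N) :=
      (Submodule.Quotient.eq _).1 (hzx.trans hc.symm)
    obtain ⟨ε, hε, w, hw⟩ := exists_smul_of_mem_maximalIdeal_smul_top h1
    obtain ⟨d, m, hd⟩ := hN w
    refine ⟨ε, hε, incl z, ⟨hz, ?_⟩, by rw [hredincl, hzx, hsec]⟩
    have h2 : incl z = f (c + ε • d) + (π * ε) • m := by
      rw [eq_add_of_sub_eq' hw, map_add, map_smul, hd, ← hff', map_add, map_smul, smul_add,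
        smul_smul, mul_comm ε π, add_assoc]
    rw [h2]
    exact Submodule.add_mem_sup ⟨_, rfl⟩ ⟨m, rfl⟩
  choose ε0 hε0 hTε0 using fun i j => exists_le_of_fg (Q i j) (hQmono i j) (T i j) (hTfg i j)
    (hTQ i j)
  obtain ⟨ε, hε, hεd⟩ := exists_dvd_of_finset (Finset.univ ×ˢ Finset.range (l + 1))
    (fun a : Fin s × ℕ => ε0 a.1 a.2) (fun a _ => hε0 _ _)
  have hT : ∀ i j, T i j ≤ Q i j ε := fun i j => by
    by_cases hj : j ≤ l
    · exact (hTε0 i j).trans (hQmono i j _ _ (hεd (i, j) (by simp; omega)))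
    · rintro x ⟨hx, -⟩
      obtain ⟨z, hz, rfl⟩ := (hBar M i j _).1 hx
      have hz0 : (z : V) ∈ Fil i l := hdec i (not_le.1 hj).le hz
      rw [hbot, Submodule.mem_bot, ZeroMemClass.coe_eq_zero] at hz0
      rw [hz0, map_zero]
      exact zero_mem _
  have hπ' : π * ε ∈ IsLocalRing.maximalIdeal O := Ideal.mul_mem_right _ _ hπ
  have hlast : LiftableModulo O K Fil M (π * ε) hπ' Bbar := by
    have hsq : Function.Surjective (algebraMap O (Oq O (π * ε))) := Ideal.Quotient.mk_surjective
    have hB := mem_span_image_iff hsq (redMapTil O M (π * ε)) (LinearMap.range f)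
    have hF := fun i j => mem_span_image_iff hsq (redMapTil O M (π * ε)) (filM O K Fil M i j)
    refine ⟨Submodule.span (Oq O (π * ε)) (redMapTil O M (π * ε) '' (LinearMap.range f : Set M)),
      flat_quotient_of_retraction M (π * ε) f r hr, ?_, fun i j => ?_⟩
    · refine Set.Subset.antisymm ?_ fun x hx => ?_
      · rintro _ ⟨y, hy, rfl⟩
        obtain ⟨_, ⟨c, rfl⟩, rfl⟩ := (hB y).1 hy
        change redMap O M (f c) ∈ Bbar
        rw [hredf]
        exact Subtype.property _
      · obtain ⟨b, hb, rfl⟩ := hliftM x hx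
        exact ⟨redMapTil O M (π * ε) b, (hB _).2 ⟨b, hb, rfl⟩, rfl⟩
    · refine Set.Subset.antisymm ?_ fun x hx => ?_
      · rintro _ ⟨y, ⟨hy1, hy2⟩, rfl⟩
        refine ⟨?_, ?_⟩
        · obtain ⟨z, hz, rfl⟩ := (hF i j y).1 hy1
          exact (hBar M i j _).2 ⟨z, hz, rfl⟩
        · obtain ⟨_, ⟨c, rfl⟩, rfl⟩ := (hB y).1 hy2
          change redMap O M (f c) ∈ Bbar
          rw [hredf]
          exact Subtype.property _
      · obtain ⟨z, ⟨hz1, hz2⟩, rfl⟩ := hT i j hx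
        refine ⟨redMapTil O M (π * ε) z, ⟨(hF i j _).2 ⟨z, hz1, rfl⟩, ?_⟩, rfl⟩
        obtain ⟨_, ⟨c, rfl⟩, _, ⟨m, rfl⟩, rfl⟩ := Submodule.mem_sup.1 hz2
        refine (hB _).2 ⟨f c, ⟨c, rfl⟩, (Submodule.Quotient.eq _).2 ?_⟩
        rw [sub_add_cancel_left]
        exact neg_mem (Submodule.smul_mem_smul (Ideal.mem_span_singleton_self _)
          Submodule.mem_top)
  -- `πε` divides `π`, so `ε` is a unit
  obtain ⟨c, hc⟩ := hmax _ hπ' hlast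
  refine (IsLocalRing.mem_maximalIdeal _).1 hε (IsUnit.of_mul_eq_one c ?_)
  exact mul_left_cancel₀ hπ0 (by rw [← mul_assoc, ← hc, mul_one])
end

section
/- Let E be a multi-filtered vector space over a field F, let G ⊆ E be a subspace with the induced filtrations, and let B = E/G carry the quotient filtrations. For any subspace B' ⊆ E with the induced filtrations, one has w(B') ≤ w(B' ∩ G) + w(im(B')), where B' ∩ G carries the filtrations induced from E and im(B'), the image of B' in B, carries the filtrations induced from B. Moreover, if B' ∩ G = 0, then w(B') ≤ w(im(B')), with equality if and only if the projection B' → im(B') is an isomorphism of multi-filtered vector spaces (i.e., it carries each filtration step of B' onto the corresponding induced filtration step of im(B')). -/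
/-!
Abel summation rewrites the weight of a subspace `W` as `Σ_i Σ_{j < l} dim (Fil_i^{j+1} ∩ W)`
(`filWeight_inducedFil`), so the estimate reduces to comparing dimensions step by step.
With `π : E → E/G` the projection, rank-nullity on `Fil_i^j ∩ B'` gives
`dim (Fil_i^j ∩ B') = dim (π (Fil_i^j ∩ B')) + dim (Fil_i^j ∩ B' ∩ G)`, and
`π (Fil_i^j ∩ B') ≤ π (Fil_i^j) ∩ π B'`, the right side being the induced step on `im B'`.
Summing gives the inequality. If `B' ∩ G = 0`, equality of the sums forces equality of all
dimensions, hence equality of these nested subspaces; conversely that equality gives equal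
dimensions.
-/

open Module Submodule

section QuotFil

variable (F : Type*) [CommRing F] {E : Type*} [AddCommGroup E] [Module F E] {s : ℕ}

/-- The quotient filtrations on `E/G` induced by filtrations on `E`. -/
def quotFil (G : Submodule F E) (Fil : Fin s → ℕ → Submodule F E) :
    Fin s → ℕ → Submodule F (E ⧸ G) :=
  fun i j => Submodule.map G.mkQ (Fil i j)

end QuotFil

/-- Abel summation, with the boundary term `n * d (n + 1)` kept on the left. -/
theorem abel_sum_weight (d : ℕ → ℕ) (hd : Antitone d) (n : ℕ) :
    ∑ j ∈ Finset.range (n + 1), j * (d j - d (j + 1)) + n * d (n + 1)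
      = ∑ j ∈ Finset.range n, d (j + 1) := by
  induction n with
  | zero => simp
  | succ n ih =>
    rw [Finset.sum_range_succ, Finset.sum_range_succ (fun j => d (j + 1)) n, ← ih]
    obtain ⟨c, hc⟩ := Nat.exists_eq_add_of_le (hd (Nat.le_succ (n + 1)))
    simp only [Nat.succ_eq_add_one] at hc
    rw [hc, Nat.add_sub_cancel_left]
    ring

theorem finrank_quot_comap {F V : Type*} [Field F] [AddCommGroup V] [Module F V]
    [FiniteDimensional F V] {p q : Submodule F V} (h : q ≤ p) :
    finrank F (p ⧸ Submodule.comap p.subtype q) = finrank F p - finrank F q := by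
  rw [Submodule.finrank_quotient, (Submodule.comapSubtypeEquivOfLe h).finrank_eq]

theorem finrank_comap_subtype {F V : Type*} [Field F] [AddCommGroup V] [Module F V]
    (p W : Submodule F V) :
    finrank F (Submodule.comap W.subtype p) = finrank F (p ⊓ W : Submodule F V) := by
  rw [← Submodule.finrank_map_subtype_eq, Submodule.map_comap_subtype, inf_comm]

theorem filWeight_inducedFil {F V : Type*} [Field F] [AddCommGroup V] [Module F V]
    [FiniteDimensional F V] {s : ℕ} (Fil : Fin s → ℕ → Submodule F V) (l : ℕ)
    (hdec : ∀ i, Antitone (Fil i)) (hbot : ∀ i, Fil i l = ⊥) (W : Submodule F V) :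
    filWeight F (inducedFil F Fil W) l
      = ∑ i, ∑ j ∈ Finset.range l, finrank F (Fil i (j + 1) ⊓ W : Submodule F V) := by
  refine Finset.sum_congr rfl fun i _ => ?_
  have hd : Antitone fun j => finrank F (Fil i j ⊓ W : Submodule F V) := fun a b hab =>
    Submodule.finrank_mono (inf_le_inf_right W (hdec i hab))
  have hl : Fil i (l + 1) = ⊥ := le_bot_iff.1 ((hdec i l.le_succ).trans (hbot i).le)
  rw [← abel_sum_weight _ hd l, hl, bot_inf_eq, finrank_bot, mul_zero, add_zero]
  refine Finset.sum_congr rfl fun j _ => ?_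
  have hle : inducedFil F Fil W i (j + 1) ≤ inducedFil F Fil W i j :=
    Submodule.comap_mono (hdec i j.le_succ)
  rw [finrank_quot_comap hle]
  rw [inducedFil, inducedFil, finrank_comap_subtype, finrank_comap_subtype]

/-- Rank-nullity for the projection modulo `G` restricted to `p`. -/
theorem finrank_map_mkQ_add {F V : Type*} [Field F] [AddCommGroup V] [Module F V]
    [FiniteDimensional F V] (G p : Submodule F V) :
    finrank F (Submodule.map G.mkQ p) + finrank F (p ⊓ G : Submodule F V) = finrank F p := by
  have h := LinearMap.finrank_range_add_finrank_ker (G.mkQ.domRestrict p)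
  rwa [LinearMap.range_domRestrict, LinearMap.ker_domRestrict, Submodule.ker_mkQ,
    finrank_comap_subtype, inf_comm G p] at h


/-- Let `E` be a multi-filtered vector space, `G ⊆ E` a subspace with the induced
filtrations and `B = E/G` with the quotient filtrations. For any subspace `B' ⊆ E`,
`w(B') ≤ w(B' ∩ G) + w(im B')`; moreover if `B' ∩ G = 0` then `w(B') ≤ w(im B')`, with
equality iff the projection `B' → im B'` carries each filtration step of `B'` onto the
corresponding induced filtration step of `im B'`. -/
theorem weight_estimate_subspace
    (F : Type*) [Field F] (E : Type*) [AddCommGroup E] [Module F E] [FiniteDimensional F E]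
    {s : ℕ} (Fil : Fin s → ℕ → Submodule F E) (l : ℕ)
    (hdec : ∀ i, Antitone (Fil i)) (htop : ∀ i, Fil i 0 = ⊤) (hbot : ∀ i, Fil i l = ⊥)
    (G : Submodule F E) (B' : Submodule F E) :
    filWeight F (inducedFil F Fil B') l
      ≤ filWeight F (inducedFil F Fil (B' ⊓ G)) l
        + filWeight F (inducedFil F (quotFil F G Fil) (Submodule.map G.mkQ B')) l ∧
    (B' ⊓ G = ⊥ →
      filWeight F (inducedFil F Fil B') l
        ≤ filWeight F (inducedFil F (quotFil F G Fil) (Submodule.map G.mkQ B')) l ∧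
      (filWeight F (inducedFil F Fil B') l
          = filWeight F (inducedFil F (quotFil F G Fil) (Submodule.map G.mkQ B')) l ↔
        ∀ i j, Submodule.map (G.mkQ ∘ₗ B'.subtype) (inducedFil F Fil B' i j)
          = quotFil F G Fil i j ⊓ Submodule.map G.mkQ B')) := by
  have hqdec : ∀ i, Antitone (quotFil F G Fil i) := fun i _ _ h => Submodule.map_mono (hdec i h)
  have hqbot : ∀ i, quotFil F G Fil i l = ⊥ := fun i => by simp [quotFil, hbot]
  have hmap_le : ∀ i j, Submodule.map G.mkQ (Fil i j ⊓ B')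
      ≤ quotFil F G Fil i j ⊓ Submodule.map G.mkQ B' := fun i j => Submodule.map_inf_le _
  rw [filWeight_inducedFil Fil l hdec hbot, filWeight_inducedFil Fil l hdec hbot,
    filWeight_inducedFil _ l hqdec hqbot]
  have hstep : ∀ i j, finrank F (Fil i j ⊓ B' : Submodule F E)
      ≤ finrank F (Fil i j ⊓ (B' ⊓ G) : Submodule F E)
        + finrank F (quotFil F G Fil i j ⊓ Submodule.map G.mkQ B' : Submodule F (E ⧸ G)) := by
    intro i j
    have h₁ := finrank_map_mkQ_add G (Fil i j ⊓ B')
    have h₂ := Submodule.finrank_mono (hmap_le i j)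
    rw [inf_assoc] at h₁
    omega
  refine ⟨?_, fun hBG => ?_⟩
  · simp only [← Finset.sum_add_distrib]
    exact Finset.sum_le_sum fun i _ => Finset.sum_le_sum fun j _ => hstep i (j + 1)
  have hstep' : ∀ i j, finrank F (Fil i j ⊓ B' : Submodule F E)
      ≤ finrank F (quotFil F G Fil i j ⊓ Submodule.map G.mkQ B' : Submodule F (E ⧸ G)) := by
    intro i j
    have h := hstep i j
    rwa [hBG, inf_bot_eq, finrank_bot, zero_add] at h
  -- With `B' ∩ G = 0` the projection preserves the dimension of each `Fil_i^j ∩ B'`.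
  have hdim : ∀ i j, finrank F (Submodule.map G.mkQ (Fil i j ⊓ B'))
      = finrank F (Fil i j ⊓ B' : Submodule F E) := by
    intro i j
    have h := finrank_map_mkQ_add G (Fil i j ⊓ B')
    rwa [inf_assoc, hBG, inf_bot_eq, finrank_bot, add_zero] at h
  have himg : ∀ i j, Submodule.map (G.mkQ ∘ₗ B'.subtype) (inducedFil F Fil B' i j)
      = Submodule.map G.mkQ (Fil i j ⊓ B') := by
    intro i j
    rw [inducedFil, Submodule.map_comp, Submodule.map_comap_subtype, inf_comm]
  have hsum : ∀ i ∈ Finset.univ,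
      ∑ j ∈ Finset.range l, finrank F (Fil i (j + 1) ⊓ B' : Submodule F E)
        ≤ ∑ j ∈ Finset.range l, finrank F
          (quotFil F G Fil i (j + 1) ⊓ Submodule.map G.mkQ B' : Submodule F (E ⧸ G)) :=
    fun i _ => Finset.sum_le_sum fun j _ => hstep' i (j + 1)
  refine ⟨Finset.sum_le_sum hsum, fun heq i j => ?_, fun h => ?_⟩
  · rw [himg]
    -- The sums see only the steps `1, …, l`; step `0` is everything and later steps vanish.
    rcases j with _ | j
    · simp [quotFil, htop, Submodule.range_mkQ]
    rcases lt_or_ge j l with hj | hj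
    · have h₁ := (Finset.sum_eq_sum_iff_of_le hsum).1 heq i (Finset.mem_univ i)
      have h₂ := (Finset.sum_eq_sum_iff_of_le fun j _ => hstep' i (j + 1)).1 h₁ j
        (Finset.mem_range.2 hj)
      exact Submodule.eq_of_le_of_finrank_eq (hmap_le i (j + 1)) ((hdim i (j + 1)).trans h₂)
    · have hz : Fil i (j + 1) = ⊥ :=
        le_bot_iff.1 ((hdec i (hj.trans j.le_succ)).trans (hbot i).le)
      simp [quotFil, hz]
  · refine Finset.sum_congr rfl fun i _ => Finset.sum_congr rfl fun j _ => ?_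
    rw [← hdim, ← himg, h]
end

section
/- Let 0 → G → E → B → 0 be a short exact sequence of multi-filtered vector spaces over a field F, where G ⊆ E carries the induced filtrations and B = E/G carries the quotient filtrations. Assume: (a) B is semistable; (b) every nonzero subspace W ⊆ G (with induced filtrations) satisfies μ(W) < μ(B); and (c) the sequence admits no splitting as multi-filtered vector spaces, i.e., there is no F-linear section B → E preserving the filtrations. Then every nonzero subspace B' ⊆ E with the induced filtrations satisfies μ(B') ≤ μ(B), and if μ(B') = μ(B) then dim(B') < dim(B). -/
/-!
Abel summation turns the weight of a multi-filtered space into `Σ_i Σ_{j ≥ 1} dim Fil_i^j`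
(`filWeight_eq_sum`). For `B' ⊆ E` put `A = B' ∩ G` and let `C` be the image of `B'` in
`E/G`. Intersecting each filtration step with `B'` and applying rank–nullity to `E → E/G` gives
`dim B' = dim A + dim C` and `w(B') ≤ w(A) + w(C)`, since the image of `Fil ∩ B'` lies in
`image(Fil) ∩ C` (`finrank_inf_le`). As `w(C) ≤ μ(B) dim C` by semistability and
`w(A) ≤ μ(B) dim A`, strictly unless `A = 0`, the slope bound follows.

If equality holds, then `A = 0` and `B'` maps isomorphically onto `C`. If moreover
`dim B' ≥ dim B`, then `C = B`, and equality of the weights forces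
`dim (Fil ∩ B') = dim image(Fil)` at every step, so that the inverse `B → B'` preserves the
filtrations and splits the sequence (`exists_filtered_section`).
-/

open Module Submodule

section Auxiliary

variable {F : Type*} [Field F] {V : Type*} [AddCommGroup V] [Module F V] {s : ℕ}

/-- Abel summation; monotonicity makes the truncated differences genuine, and `l * d l` is the
boundary term. -/
lemma sum_range_mul_sub (d : ℕ → ℕ) (hd : Antitone d) (l : ℕ) :
    ∑ j ∈ Finset.range l, j * (d j - d (j + 1)) + l * d l = ∑ j ∈ Finset.range l, d (j + 1) := by
  induction l with
  | zero => simp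
  | succ n ih =>
    rw [Finset.sum_range_succ, Finset.sum_range_succ, ← ih]
    obtain ⟨k, hk⟩ := Nat.exists_eq_add_of_le (hd (Nat.le_succ n))
    simp only [Nat.succ_eq_add_one] at hk
    rw [hk, Nat.add_sub_cancel_left]
    ring

lemma finrank_comap_subtype_eq (X W : Submodule F V) :
    finrank F (X.comap W.subtype) = finrank F (X ⊓ W : Submodule F V) := by
  rw [← finrank_map_subtype_eq W (X.comap W.subtype), map_comap_subtype, inf_comm]

/-- A complement `W` of `G` such that every `Fil i j ⊓ W` has the same image in `V/G` as
`Fil i j` provides a filtered splitting, namely the inverse of the isomorphism `W ≃ V/G`. -/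
lemma exists_filtered_section (Fil : Fin s → ℕ → Submodule F V) (G W : Submodule F V)
    (hA : W ⊓ G = ⊥) (hC : W.map G.mkQ = ⊤)
    (h : ∀ i j, (Fil i j).map G.mkQ ≤ (Fil i j ⊓ W).map G.mkQ) :
    ∃ sec : (V ⧸ G) →ₗ[F] V, (∀ x : V ⧸ G, G.mkQ (sec x) = x) ∧
      ∀ i j, Submodule.map sec (quotFil F G Fil i j) ≤ Fil i j := by
  have hinj : Function.Injective (G.mkQ.domRestrict W) := by
    rw [← LinearMap.ker_eq_bot, LinearMap.ker_eq_bot']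
    intro w hw
    have hwG : (w : V) ∈ W ⊓ G := ⟨w.2, by simpa using hw⟩
    rw [hA, mem_bot] at hwG
    exact Subtype.ext hwG
  have hsurj : Function.Surjective (G.mkQ.domRestrict W) := by
    rw [← LinearMap.range_eq_top, LinearMap.range_domRestrict, hC]
  let e := LinearEquiv.ofBijective (G.mkQ.domRestrict W) ⟨hinj, hsurj⟩
  refine ⟨W.subtype ∘ₗ e.symm.toLinearMap, fun x => e.apply_symm_apply x, ?_⟩
  rintro i j _ ⟨x, hx, rfl⟩
  obtain ⟨y, hy, rfl⟩ := h i j hx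
  have hey : e.symm (G.mkQ y) = ⟨y, hy.2⟩ := (LinearEquiv.symm_apply_eq e).2 rfl
  change (e.symm (G.mkQ y) : V) ∈ Fil i j
  rw [hey]
  exact hy.1

variable [FiniteDimensional F V]

lemma filWeight_eq_sum (Fil : Fin s → ℕ → Submodule F V) (l : ℕ)
    (hdec : ∀ i, Antitone (Fil i)) (hbot : ∀ i, Fil i l = ⊥) :
    filWeight F Fil l = ∑ i : Fin s, ∑ j ∈ Finset.range l, finrank F (Fil i (j + 1)) := by
  unfold filWeight
  refine Finset.sum_congr rfl fun i _ => ?_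
  have hd : Antitone fun j => finrank F (Fil i j) := fun a b h => finrank_mono (hdec i h)
  have hgr : ∀ j, finrank F ((Fil i j) ⧸ ((Fil i (j + 1)).comap (Fil i j).subtype)) =
      finrank F (Fil i j) - finrank F (Fil i (j + 1)) := by
    intro j
    have h := finrank_quotient_add_finrank ((Fil i (j + 1)).comap (Fil i j).subtype)
    rw [finrank_comap_subtype_eq, inf_eq_left.2 (hdec i (Nat.le_add_right j 1))] at h
    omega
  simp only [hgr]
  have hl : finrank F (Fil i l) = 0 := by rw [hbot, finrank_bot]
  rw [Finset.sum_range_succ, ← sum_range_mul_sub _ hd l]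
  simp [hl]

lemma filWeight_induced (Fil : Fin s → ℕ → Submodule F V) (l : ℕ)
    (hdec : ∀ i, Antitone (Fil i)) (hbot : ∀ i, Fil i l = ⊥) (W : Submodule F V) :
    filWeight F (inducedFil F Fil W) l =
      ∑ i : Fin s, ∑ j ∈ Finset.range l, finrank F (Fil i (j + 1) ⊓ W : Submodule F V) := by
  rw [filWeight_eq_sum]
  · exact Finset.sum_congr rfl fun i _ => Finset.sum_congr rfl fun j _ =>
      finrank_comap_subtype_eq _ W
  · exact fun i a b h => comap_mono (hdec i h)
  · simp [inducedFil, hbot]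

/-- Rank–nullity for the projection `V → V/G` restricted to a subspace `X`. -/
lemma finrank_eq_inf_add_map (G X : Submodule F V) :
    finrank F X = finrank F (X ⊓ G : Submodule F V) + finrank F (X.map G.mkQ) := by
  have h := (G.mkQ.domRestrict X).finrank_range_add_finrank_ker
  have hk : LinearMap.ker (G.mkQ.domRestrict X) = G.comap X.subtype := by
    ext; simp
  rw [hk, finrank_comap_subtype_eq, LinearMap.range_domRestrict, inf_comm] at h
  omega

/-- The contribution of one filtration step `Y` to `w(W) ≤ w(W ∩ G) + w(image of W)`. -/
lemma finrank_inf_le (G Y W : Submodule F V) :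
    finrank F (Y ⊓ W : Submodule F V) ≤ finrank F (Y ⊓ (W ⊓ G) : Submodule F V) +
      finrank F (Y.map G.mkQ ⊓ W.map G.mkQ : Submodule F (V ⧸ G)) := by
  rw [finrank_eq_inf_add_map G (Y ⊓ W), inf_assoc]
  exact Nat.add_le_add_left (finrank_mono (map_inf_le _)) _

end Auxiliary

/-- Let `0 → G → E → B → 0` be a short exact sequence of multi-filtered vector spaces over a
field `F` (with `G ⊆ E` induced and `B = E/G` quotient filtrations). If `B` is semistable,
every nonzero subspace of `G` has slope strictly less than `μ(B)`, and the sequence admits no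
filtered splitting, then every nonzero subspace `B' ⊆ E` satisfies `μ(B') ≤ μ(B)`, and in
case of equality `dim B' < dim B`. -/
theorem slope_estimate_of_no_splitting
    (F : Type*) [Field F] (E : Type*) [AddCommGroup E] [Module F E] [FiniteDimensional F E]
    {s : ℕ} (Fil : Fin s → ℕ → Submodule F E) (l : ℕ)
    (hdec : ∀ i, Antitone (Fil i)) (htop : ∀ i, Fil i 0 = ⊤) (hbot : ∀ i, Fil i l = ⊥)
    (G : Submodule F E)
    (hBss : Semistable F (quotFil F G Fil) l)
    (hGslope : ∀ W : Submodule F E, W ≤ G → W ≠ ⊥ →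
      filSlope F (inducedFil F Fil W) l < filSlope F (quotFil F G Fil) l)
    (hnosplit : ¬ ∃ sec : (E ⧸ G) →ₗ[F] E,
      (∀ x : E ⧸ G, G.mkQ (sec x) = x) ∧
      ∀ i j, Submodule.map sec (quotFil F G Fil i j) ≤ Fil i j) :
    ∀ B' : Submodule F E, B' ≠ ⊥ →
      filSlope F (inducedFil F Fil B') l ≤ filSlope F (quotFil F G Fil) l ∧
      (filSlope F (inducedFil F Fil B') l = filSlope F (quotFil F G Fil) l →
        Module.finrank F B' < Module.finrank F (E ⧸ G)) := by
  intro B' hB'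
  have hqdec : ∀ i, Antitone (quotFil F G Fil i) := fun i a b h => map_mono (hdec i h)
  have hqbot : ∀ i, quotFil F G Fil i l = ⊥ := fun i => by simp [quotFil, hbot]
  set μ := filSlope F (quotFil F G Fil) l with hμ
  have hw (W : Submodule F E) := filWeight_induced Fil l hdec hbot W
  have hwq (W : Submodule F (E ⧸ G)) := filWeight_induced (quotFil F G Fil) l hqdec hqbot W
  set C : Submodule F (E ⧸ G) := B'.map G.mkQ with hCdef
  have hdim := finrank_eq_inf_add_map G B'
  have hdimpos : (0 : ℚ) < finrank F B' := by
    exact_mod_cast (one_le_finrank_iff.2 hB' : 1 ≤ finrank F B')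
  have hwle : filWeight F (inducedFil F Fil B') l ≤
      filWeight F (inducedFil F Fil (B' ⊓ G)) l +
        filWeight F (inducedFil F (quotFil F G Fil) C) l := by
    rw [hw, hw, hwq]
    simp only [← Finset.sum_add_distrib]
    exact Finset.sum_le_sum fun i _ => Finset.sum_le_sum fun j _ => finrank_inf_le G _ B'
  have hwleQ : (filWeight F (inducedFil F Fil B') l : ℚ) ≤
      filWeight F (inducedFil F Fil (B' ⊓ G)) l +
        filWeight F (inducedFil F (quotFil F G Fil) C) l := by exact_mod_cast hwle
  have hdimQ : (finrank F B' : ℚ) = finrank F (B' ⊓ G : Submodule F E) + finrank F C := by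
    exact_mod_cast hdim
  have hCle : (filWeight F (inducedFil F (quotFil F G Fil) C) l : ℚ) ≤ μ * finrank F C := by
    by_cases hC : C = ⊥
    · have hC0 : filWeight F (inducedFil F (quotFil F G Fil) C) l = 0 := by
        rw [hwq, hC]
        simp
      rw [hC0, hC, finrank_bot]
      simp
    · have hpos : (0 : ℚ) < finrank F C := by
        exact_mod_cast (one_le_finrank_iff.2 hC : 1 ≤ finrank F C)
      exact (div_le_iff₀ hpos).1 (hBss C hC)
  by_cases hA : B' ⊓ G = ⊥
  · have hA0 : filWeight F (inducedFil F Fil (B' ⊓ G)) l = 0 := by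
      rw [hw, hA]
      simp
    have hAd : finrank F (B' ⊓ G : Submodule F E) = 0 := by rw [hA, finrank_bot]
    rw [hA0, Nat.cast_zero, zero_add] at hwleQ
    rw [hA0, zero_add] at hwle
    rw [hAd, Nat.cast_zero, zero_add] at hdimQ
    refine ⟨(div_le_iff₀ hdimpos).2 ?_, fun heq => ?_⟩
    · rw [hdimQ]
      exact hwleQ.trans hCle
    · by_contra hlt
      apply hnosplit
      have hCtop : C = ⊤ := by
        apply eq_top_of_finrank_eq
        have := C.finrank_le
        rw [← hCdef] at hdim
        omega
      have heqw : (filWeight F (inducedFil F Fil B') l : ℚ) = μ * finrank F B' :=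
        (div_eq_iff hdimpos.ne').1 heq
      have hweq : filWeight F (inducedFil F Fil B') l =
          filWeight F (inducedFil F (quotFil F G Fil) C) l := by
        apply le_antisymm hwle
        rw [hdimQ] at heqw
        rw [← heqw] at hCle
        exact_mod_cast hCle
      -- Equal sums of termwise comparable dimensions are termwise equal.
      have hstep (i : Fin s) (j : ℕ) : finrank F (Fil i (j + 1) ⊓ B' : Submodule F E) ≤
          finrank F (quotFil F G Fil i (j + 1) ⊓ C : Submodule F (E ⧸ G)) := by
        have h := finrank_inf_le G (Fil i (j + 1)) B'
        rwa [hA, inf_bot_eq, finrank_bot, zero_add] at h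
      rw [hw, hwq, Finset.sum_eq_sum_iff_of_le fun i _ => Finset.sum_le_sum fun j _ => hstep i j]
        at hweq
      apply exists_filtered_section Fil G B' hA hCtop
      -- The weights only see the steps `1, …, l`; step `0` is everything, later ones vanish.
      intro i j
      rcases j with _ | j
      · simp only [htop, top_inf_eq]
        rw [← hCdef, hCtop]
        exact le_top
      rcases lt_or_ge j l with hj | hj
      · have h := (Finset.sum_eq_sum_iff_of_le fun j _ => hstep i j).1
          (hweq i (Finset.mem_univ i)) j (Finset.mem_range.2 hj)
        rw [hCtop, inf_top_eq, finrank_eq_inf_add_map G (Fil i (j + 1) ⊓ B'), inf_assoc, hA,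
          inf_bot_eq, finrank_bot, zero_add] at h
        exact (eq_of_le_of_finrank_eq (map_mono inf_le_left) h).ge
      · have h0 : Fil i (j + 1) = ⊥ := by
          rw [eq_bot_iff, ← hbot i]
          exact hdec i (by omega)
        simp [h0]
  · have hpos : (0 : ℚ) < finrank F (B' ⊓ G : Submodule F E) := by
      exact_mod_cast (one_le_finrank_iff.2 hA : 1 ≤ finrank F (B' ⊓ G : Submodule F E))
    have hAlt := (div_lt_iff₀ hpos).1 (hGslope (B' ⊓ G) inf_le_right hA)
    have hlt : filSlope F (inducedFil F Fil B') l < μ := by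
      refine (div_lt_iff₀ hdimpos).2 ?_
      rw [hdimQ, mul_add]
      linarith
    exact ⟨hlt.le, fun h => absurd h hlt.ne⟩
end
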